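/- arXiv:2411.09653 — 4 statements merged into one kernel-verified Lean document; each statement's English description precedes it below -/
import Mathlib

section
/- Let X̄ ~ N(m, Σ) be a Gaussian random vector on ℝ^n with Σ symmetric positive definite, let W̄ ~ N(0, R) on ℝ^m with R symmetric positive definite be independent of X̄, let H be an m×n matrix, Ȳ := HX̄ + W̄, and K := ΣHᵀ(HΣHᵀ+R)⁻¹. Then for every y ∈ ℝ^m, the law of X̄ + K(y − Ȳ) is the Gaussian N(m + K(y − Hm), Σ − ΣHᵀ(HΣHᵀ+R)⁻¹HΣ). -/
open MeasureTheory ProbabilityTheory Matrix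
open scoped Matrix ENNReal

/-- The multivariate Gaussian measure `N(m, Σ)` on `ℝ^n`, defined through its density
with respect to Lebesgue measure. -/
noncomputable def mvGaussian {n : ℕ} (m : Fin n → ℝ) (S : Matrix (Fin n) (Fin n) ℝ) :
    Measure (Fin n → ℝ) :=
  volume.withDensity fun x =>
    ENNReal.ofReal ((Real.sqrt ((2 * Real.pi) ^ n * S.det))⁻¹ *
      Real.exp (-(1 / 2) * ((x - m) ⬝ᵥ (S⁻¹).mulVec (x - m))))

lemma mvGaussian_std (n : ℕ) :
    (mvGaussian 0 1 : Measure (Fin n → ℝ)) = Measure.pi (fun _ => gaussianReal 0 1) := by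
  symm
  apply Measure.pi_eq
  intro s hs
  rw [mvGaussian, withDensity_apply _ (MeasurableSet.univ_pi hs), volume_pi,
    Measure.restrict_pi_pi]
  have hden : ∀ x : Fin n → ℝ, (Real.sqrt ((2 * Real.pi) ^ n * (1 : Matrix (Fin n) (Fin n) ℝ).det))⁻¹ *
      Real.exp (-(1 / 2) * ((x - 0) ⬝ᵥ ((1 : Matrix (Fin n) (Fin n) ℝ)⁻¹).mulVec (x - 0)))
      = ∏ i, gaussianPDFReal 0 1 (x i) := by
    intro x
    simp only [gaussianPDFReal, Finset.prod_mul_distrib, ← Real.exp_sum]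
    congr 1
    · simp only [det_one, mul_one, NNReal.coe_one, Finset.prod_const, Finset.card_univ,
        Fintype.card_fin, inv_pow]
      rw [Real.sqrt_eq_rpow, Real.sqrt_eq_rpow, ← Real.rpow_natCast, ← Real.rpow_natCast,
        ← Real.rpow_mul (by positivity), ← Real.rpow_mul (by positivity), mul_comm (n : ℝ)]
    · simp [dotProduct, Finset.mul_sum, neg_div]
      refine Finset.sum_congr rfl fun i _ => by ring
  simp_rw [hden]
  rw [← ofReal_integral_eq_lintegral_ofReal]
  · rw [integral_fintype_prod_eq_prod, ENNReal.ofReal_prod_of_nonneg]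
    · refine Finset.prod_congr rfl fun i _ => ?_
      rw [gaussianReal_apply_eq_integral 0 one_ne_zero]
    · intro i _
      exact integral_nonneg fun x => gaussianPDFReal_nonneg _ _ _
  · exact Integrable.fintype_prod (fun i => (integrable_gaussianPDFReal 0 1).integrableOn)
  · exact Filter.Eventually.of_forall fun x =>
      Finset.prod_nonneg fun i _ => gaussianPDFReal_nonneg _ _ _

lemma mvGaussian_map {n : ℕ} (m : Fin n → ℝ) (S A : Matrix (Fin n) (Fin n) ℝ)
    (hS : S.PosDef) (hA : A * Aᵀ = S) :
    (mvGaussian 0 1 : Measure (Fin n → ℝ)).map (fun x => m + A *ᵥ x) = mvGaussian m S := by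
  have hdet : A.det * A.det = S.det := by rw [← hA, det_mul, det_transpose]
  have hSd := hS.det_pos
  have hA0 : A.det ≠ 0 := by
    intro h; rw [h] at hdet; simp at hdet; linarith
  have hgm : Measurable (fun x : Fin n → ℝ => m + A *ᵥ x) := by
    apply Continuous.measurable; fun_prop
  have hvol : (volume : Measure (Fin n → ℝ)).map (fun x => m + A *ᵥ x)
      = ENNReal.ofReal (abs (A.det)⁻¹) • volume := by
    have h1 := Real.map_matrix_volume_pi_eq_smul_volume_pi hA0
    have h2 : (fun x : Fin n → ℝ => m + A *ᵥ x) = (fun x => m + x) ∘ (toLin' A) := by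
      ext; simp
    rw [h2, ← Measure.map_map (by fun_prop) (by apply Continuous.measurable; fun_prop), h1,
      Measure.map_smul, map_add_left_eq_self]
  have hvol2 : (volume : Measure (Fin n → ℝ))
      = ENNReal.ofReal (abs A.det) • (volume : Measure (Fin n → ℝ)).map (fun x => m + A *ᵥ x) := by
    rw [hvol, smul_smul, ← ENNReal.ofReal_mul (abs_nonneg _), ← abs_mul, mul_inv_cancel₀ hA0]
    simp
  ext s hs
  rw [Measure.map_apply hgm hs, mvGaussian, mvGaussian, withDensity_apply _ hs,
    withDensity_apply _ (hgm hs)]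
  conv_rhs => rw [hvol2]
  have hm : Measurable fun x => ENNReal.ofReal ((Real.sqrt ((2 * Real.pi) ^ n * S.det))⁻¹ *
      Real.exp (-(1 / 2) * ((x - m) ⬝ᵥ (S⁻¹).mulVec (x - m)))) := by
    apply Measurable.ennreal_ofReal
    apply Continuous.measurable
    fun_prop
  rw [Measure.restrict_smul, lintegral_smul_measure, setLIntegral_map hs hm hgm, smul_eq_mul,
    ← lintegral_const_mul' _ _ ENNReal.ofReal_ne_top]
  refine lintegral_congr fun x => ?_
  rw [← ENNReal.ofReal_mul (abs_nonneg _), ← mul_assoc]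
  congr 2
  · rw [← hdet, det_one, mul_one, Real.sqrt_mul (by positivity), Real.sqrt_mul_self_eq_abs]
    have := abs_pos.2 hA0
    simp
    field_simp
  · congr 2
    have hu : IsUnit A.det := isUnit_iff_ne_zero.2 hA0
    have hut : IsUnit Aᵀ.det := by rwa [det_transpose]
    simp only [sub_zero, add_sub_cancel_left, inv_one, one_mulVec]
    rw [mulVec_mulVec, ← hA, Matrix.mul_inv_rev, Matrix.mul_assoc, Matrix.nonsing_inv_mul _ hu,
      Matrix.mul_one, ← vecMul_transpose, ← dotProduct_mulVec, mulVec_mulVec,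
      Matrix.mul_nonsing_inv _ hut, one_mulVec]

open scoped MatrixOrder Matrix.Norms.L2Operator in
lemma mvGaussian_map_toLp {n : ℕ} (m : Fin n → ℝ) (S : Matrix (Fin n) (Fin n) ℝ)
    (hS : S.PosDef) :
    (mvGaussian m S).map (WithLp.toLp 2) = multivariateGaussian (WithLp.toLp 2 m) S := by
  have hsq : CFC.sqrt S * (CFC.sqrt S)ᵀ = S := by
    have h : (CFC.sqrt S)ᵀ = CFC.sqrt S := by
      have := (CFC.sqrt_nonneg S).isSelfAdjoint.star_eq
      rwa [Matrix.star_eq_conjTranspose, conjTranspose_eq_transpose_of_trivial] at this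
    rw [h, CFC.sqrt_mul_sqrt_self _ hS.posSemidef.nonneg]
  rw [← mvGaussian_map m S _ hS hsq, mvGaussian_std, multivariateGaussian,
    ← map_pi_eq_stdGaussian, Measure.map_map (by fun_prop)
      (by apply Continuous.measurable; fun_prop), Measure.map_map (by fun_prop) (by fun_prop)]
  rfl

lemma map_toLp_injective {n : ℕ} (μ ν : Measure (Fin n → ℝ))
    (h : μ.map (WithLp.toLp 2) = ν.map (WithLp.toLp 2)) : μ = ν :=
  (MeasurableEquiv.toLp 2 (Fin n → ℝ)).map_measurableEquiv_injective h

lemma charFun_affine {n k : ℕ} {Ω : Type*} [MeasurableSpace Ω] (P : Measure Ω)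
    (U : Ω → Fin k → ℝ) (hU : Measurable U) (μ : Fin k → ℝ) (Q : Matrix (Fin k) (Fin k) ℝ)
    (hQ : Q.PosDef) (hlaw : P.map U = mvGaussian μ Q) (c : Fin n → ℝ)
    (B : Matrix (Fin n) (Fin k) ℝ) (t : EuclideanSpace ℝ (Fin n)) :
    charFun (P.map (fun ω => WithLp.toLp 2 (c + B *ᵥ U ω))) t =
      Complex.exp (((t.ofLp ⬝ᵥ (c + B *ᵥ μ) : ℝ) : ℂ) * Complex.I
        - ((t.ofLp ⬝ᵥ ((B * Q * Bᵀ) *ᵥ t.ofLp) : ℝ) : ℂ) / 2) := by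
  have h1 := charFun_multivariateGaussian (μ := WithLp.toLp 2 μ) hQ.posSemidef
    (WithLp.toLp 2 (Bᵀ *ᵥ t.ofLp))
  have hBm : Measurable (fun x : Fin k → ℝ => c + B *ᵥ x) := by
    apply Continuous.measurable; fun_prop
  have key : ∀ v : Fin k → ℝ, (Bᵀ *ᵥ t.ofLp) ⬝ᵥ v = t.ofLp ⬝ᵥ (B *ᵥ v) := by
    intro v
    rw [mulVec_transpose, dotProduct_mulVec]
  rw [← mvGaussian_map_toLp μ Q hQ, ← hlaw, Measure.map_map (by fun_prop) hU, charFun_apply,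
    integral_map (by fun_prop) (by fun_prop)] at h1
  have hm : Measurable (fun ω => WithLp.toLp 2 (c + B *ᵥ U ω)) :=
    (WithLp.measurable_toLp 2 _).comp (hBm.comp hU)
  rw [charFun_apply, integral_map hm.aemeasurable (by fun_prop)]
  have e : ∀ ω, Complex.exp ((inner ℝ (WithLp.toLp 2 (c + B *ᵥ U ω)) t : ℝ) * Complex.I)
      = Complex.exp (((t.ofLp ⬝ᵥ c : ℝ) : ℂ) * Complex.I) * Complex.exp
        ((inner ℝ ((WithLp.toLp 2 ∘ U) ω) (WithLp.toLp 2 (Bᵀ *ᵥ t.ofLp)) : ℝ) * Complex.I) := by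
    intro ω
    rw [← Complex.exp_add, ← add_mul, ← Complex.ofReal_add]
    simp [EuclideanSpace.inner_eq_star_dotProduct, key, dotProduct_add]
  simp_rw [e]
  rw [integral_const_mul, h1, ← Complex.exp_add]
  congr 1
  rw [key]
  simp only [EuclideanSpace.inner_eq_star_dotProduct, star_trivial, dotProduct_comm μ, key, dotProduct_add, mulVec_mulVec, Matrix.mul_assoc]
  push_cast
  ring

/-- **The EnKF update map transports the prior to the Gaussian posterior.**
If `X̄ ~ N(m, Σ)` on `ℝ^n` and `W̄ ~ N(0, R)` on `ℝ^m` are independent, `Ȳ = H X̄ + W̄`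
and `K = Σ Hᵀ (H Σ Hᵀ + R)⁻¹`, then for every `y` the law of `X̄ + K (y − Ȳ)` is
`N(m + K(y − Hm), Σ − Σ Hᵀ (H Σ Hᵀ + R)⁻¹ H Σ)`. -/
theorem enkf_map_pushforward_gaussian {n p : ℕ} {Ω : Type*} [MeasurableSpace Ω]
    (P : Measure Ω) [IsProbabilityMeasure P]
    (Xb : Ω → Fin n → ℝ) (Wb : Ω → Fin p → ℝ)
    (hXbm : Measurable Xb) (hWbm : Measurable Wb)
    (m : Fin n → ℝ) (S : Matrix (Fin n) (Fin n) ℝ) (R : Matrix (Fin p) (Fin p) ℝ)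
    (hS : S.PosDef) (hR : R.PosDef)
    (hXlaw : P.map Xb = mvGaussian m S) (hWlaw : P.map Wb = mvGaussian 0 R)
    (hindep : IndepFun Xb Wb P)
    (H : Matrix (Fin p) (Fin n) ℝ)
    (Yb : Ω → Fin p → ℝ) (hYb : Yb = fun ω => H.mulVec (Xb ω) + Wb ω)
    (K : Matrix (Fin n) (Fin p) ℝ) (hK : K = S * Hᵀ * (H * S * Hᵀ + R)⁻¹)
    (y : Fin p → ℝ) :
    P.map (fun ω => Xb ω + K.mulVec (y - Yb ω))
      = mvGaussian (m + K.mulVec (y - H.mulVec m))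
          (S - S * Hᵀ * (H * S * Hᵀ + R)⁻¹ * H * S) := by
  have hM : (H * S * Hᵀ + R).PosDef := by
    refine Matrix.PosDef.posSemidef_add ?_ hR
    have := hS.posSemidef.mul_mul_conjTranspose_same H
    rwa [conjTranspose_eq_transpose_of_trivial] at this
  have hMu : IsUnit (H * S * Hᵀ + R) := hM.isUnit
  have hT : (S - S * Hᵀ * (H * S * Hᵀ + R)⁻¹ * H * S).PosDef := by
    have h1 : (S⁻¹ + Hᵀ * R⁻¹ * H).PosDef := by
      refine Matrix.PosDef.add_posSemidef hS.inv ?_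
      have := hR.inv.posSemidef.conjTranspose_mul_mul_same H
      rwa [conjTranspose_eq_transpose_of_trivial] at this
    have h2 := Matrix.add_mul_mul_inv_eq_sub S⁻¹ Hᵀ R⁻¹ H hS.inv.isUnit hR.inv.isUnit
    have hSS : S⁻¹⁻¹ = S := nonsing_inv_nonsing_inv _ ((isUnit_iff_isUnit_det _).1 hS.isUnit)
    have hRR : R⁻¹⁻¹ = R := nonsing_inv_nonsing_inv _ ((isUnit_iff_isUnit_det _).1 hR.isUnit)
    rw [hSS, hRR, add_comm R] at h2
    rw [← h2 hMu]
    exact h1.inv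
  have hSt : Sᵀ = S := by
    have := hS.isHermitian
    rwa [IsHermitian, conjTranspose_eq_transpose_of_trivial] at this
  have hMt : (H * S * Hᵀ + R)ᵀ = H * S * Hᵀ + R := by
    have := hM.isHermitian
    rwa [IsHermitian, conjTranspose_eq_transpose_of_trivial] at this
  have hKM : K * (H * S * Hᵀ + R) = S * Hᵀ := by
    rw [hK, Matrix.mul_assoc, nonsing_inv_mul _ ((isUnit_iff_isUnit_det _).1 hMu), Matrix.mul_one]
  have hcov : (1 - K * H) * S * (1 - K * H)ᵀ + (-K) * R * (-K)ᵀ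
      = S - S * Hᵀ * (H * S * Hᵀ + R)⁻¹ * H * S := by
    rw [← hK]
    have e : (1 - K * H) * S * (1 - K * H)ᵀ + (-K) * R * (-K)ᵀ
        = S - K * H * S - S * Hᵀ * Kᵀ + (K * (H * S * Hᵀ + R)) * Kᵀ := by
      simp only [transpose_sub, transpose_mul, transpose_neg, transpose_one]
      simp only [Matrix.sub_mul, Matrix.mul_sub, Matrix.mul_add, Matrix.add_mul, Matrix.neg_mul,
        Matrix.mul_neg, Matrix.one_mul, Matrix.mul_one, Matrix.mul_assoc, neg_neg]
      abel
    rw [e, hKM]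
    abel
  set T := S - S * Hᵀ * (H * S * Hᵀ + R)⁻¹ * H * S with hTdef
  have hcont : ∀ {a b : ℕ} (c : Fin a → ℝ) (B : Matrix (Fin a) (Fin b) ℝ),
      Measurable (fun x : Fin b → ℝ => c + B *ᵥ x) := by
    intro a b c B
    apply Continuous.measurable; fun_prop
  have hZ : (fun ω => Xb ω + K.mulVec (y - Yb ω))
      = fun ω => (K *ᵥ y + (1 - K * H) *ᵥ Xb ω) + (0 + (-K) *ᵥ Wb ω) := by
    funext ω
    rw [hYb]
    simp only [mulVec_sub, mulVec_add, sub_mulVec, one_mulVec, mulVec_mulVec, neg_mulVec]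
    abel
  have m1 : Measurable fun ω => WithLp.toLp 2 (K *ᵥ y + (1 - K * H) *ᵥ Xb ω) :=
    (WithLp.measurable_toLp 2 _).comp ((hcont _ _).comp hXbm)
  have m2 : Measurable fun ω => WithLp.toLp 2 ((0 : Fin n → ℝ) + (-K) *ᵥ Wb ω) :=
    (WithLp.measurable_toLp 2 _).comp ((hcont _ _).comp hWbm)
  have hZm : Measurable (fun ω => Xb ω + K.mulVec (y - Yb ω)) := by
    rw [hZ]
    exact ((hcont _ _).comp hXbm).add ((hcont _ _).comp hWbm)
  have hind : IndepFun (fun ω => WithLp.toLp 2 (K *ᵥ y + (1 - K * H) *ᵥ Xb ω))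
      (fun ω => WithLp.toLp 2 ((0 : Fin n → ℝ) + (-K) *ᵥ Wb ω)) P :=
    hindep.comp (φ := fun x => WithLp.toLp 2 (K *ᵥ y + (1 - K * H) *ᵥ x))
      (ψ := fun x => WithLp.toLp 2 ((0 : Fin n → ℝ) + (-K) *ᵥ x))
      ((WithLp.measurable_toLp 2 _).comp (hcont _ _))
      ((WithLp.measurable_toLp 2 _).comp (hcont _ _))
  have hmain : (P.map (fun ω => Xb ω + K.mulVec (y - Yb ω))).map (WithLp.toLp 2)
      = (mvGaussian (m + K.mulVec (y - H.mulVec m)) T).map (WithLp.toLp 2) := by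
    rw [mvGaussian_map_toLp _ _ hT, Measure.map_map (by fun_prop) hZm]
    have : IsProbabilityMeasure
        (P.map ((WithLp.toLp 2 : (Fin n → ℝ) → EuclideanSpace ℝ (Fin n)) ∘
          fun ω => Xb ω + K.mulVec (y - Yb ω))) :=
      Measure.isProbabilityMeasure_map ((WithLp.measurable_toLp 2 _).comp hZm).aemeasurable
    apply Measure.ext_of_charFun
    ext t
    have e : ((WithLp.toLp 2 : (Fin n → ℝ) → EuclideanSpace ℝ (Fin n)) ∘
          fun ω => Xb ω + K.mulVec (y - Yb ω))
        = fun ω => WithLp.toLp 2 (K *ᵥ y + (1 - K * H) *ᵥ Xb ω)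
          + WithLp.toLp 2 ((0 : Fin n → ℝ) + (-K) *ᵥ Wb ω) := by
      rw [hZ]; rfl
    rw [e, hind.charFun_map_fun_add_eq_mul m1.aemeasurable m2.aemeasurable, Pi.mul_apply,
      charFun_affine P Xb hXbm m S hS hXlaw, charFun_affine P Wb hWbm 0 R hR hWlaw,
      charFun_multivariateGaussian hT.posSemidef, ← Complex.exp_add, ← hcov]
    congr 1
    have emean : m + K *ᵥ (y - H *ᵥ m) = K *ᵥ y + (1 - K * H) *ᵥ m := by
      simp only [mulVec_sub, sub_mulVec, one_mulVec, mulVec_mulVec]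
      abel
    rw [emean, add_mulVec]
    simp only [EuclideanSpace.inner_eq_star_dotProduct, star_trivial, mulVec_zero, add_zero,
      dotProduct_zero, dotProduct_comm (K *ᵥ y + (1 - K * H) *ᵥ m), dotProduct_add]
    push_cast
    ring
  exact map_toLp_injective _ _ hmain
end

section
/- Let X ~ N(m, Σ) be a Gaussian random vector on ℝ^n with Σ symmetric positive definite, let W ~ N(0, R) on ℝ^m with R symmetric positive definite be independent of X, let H be an m×n matrix, Y := HX + W, and K := ΣHᵀ(HΣHᵀ+R)⁻¹. Then for P_Y-almost every y, the conditional distribution of X given Y = y is the Gaussian N(m + K(y − Hm), Σ − ΣHᵀ(HΣHᵀ+R)⁻¹HΣ). -/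
open MeasureTheory ProbabilityTheory Matrix
open scoped Matrix ENNReal

section factor
open scoped MatrixOrder Matrix.Norms.L2Operator

theorem posDef_factor {n : ℕ} {A : Matrix (Fin n) (Fin n) ℝ} (hA : A.PosDef) :
    ∃ B : Matrix (Fin n) (Fin n) ℝ, IsUnit B ∧ A = Bᵀ * B := by
  obtain ⟨B, h1, h2⟩ :=
    CStarAlgebra.isStrictlyPositive_iff_eq_star_mul_self.mp hA.isStrictlyPositive
  exact ⟨B, h1, by simpa [star_eq_conjTranspose] using h2⟩

end factor

noncomputable def gdens {n : ℕ} (m : Fin n → ℝ) (S : Matrix (Fin n) (Fin n) ℝ)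
    (x : Fin n → ℝ) : ℝ :=
  (Real.sqrt ((2 * Real.pi) ^ n * S.det))⁻¹ *
      Real.exp (-(1 / 2) * ((x - m) ⬝ᵥ (S⁻¹).mulVec (x - m)))

theorem mvGaussian_eq {n : ℕ} (m : Fin n → ℝ) (S : Matrix (Fin n) (Fin n) ℝ) :
    mvGaussian m S = volume.withDensity fun x => ENNReal.ofReal (gdens m S x) := rfl

theorem gdens_nonneg {n : ℕ} (m : Fin n → ℝ) (S : Matrix (Fin n) (Fin n) ℝ)
    (x : Fin n → ℝ) : 0 ≤ gdens m S x := by unfold gdens; positivity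

theorem continuous_gdens2 {n : ℕ} (S : Matrix (Fin n) (Fin n) ℝ) :
    Continuous (fun q : (Fin n → ℝ) × (Fin n → ℝ) => gdens q.1 S q.2) := by
  unfold gdens
  fun_prop

theorem std_lintegral (n : ℕ) :
    ∫⁻ x : Fin n → ℝ, ENNReal.ofReal (Real.exp (-(1 / 2) * (x ⬝ᵥ x)))
      = ENNReal.ofReal (Real.sqrt ((2 * Real.pi) ^ n)) := by
  have h : ∀ x : Fin n → ℝ, Real.exp (-(1 / 2) * (x ⬝ᵥ x))
      = ∏ i, Real.exp (-(1/2) * (x i)^2) := by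
    intro x
    rw [← Real.exp_sum, dotProduct, Finset.mul_sum]
    simp only [pow_two]
  simp_rw [h]
  have hi : Integrable (fun t : ℝ => Real.exp (-(1/2) * t^2)) :=
    integrable_exp_neg_mul_sq (by norm_num)
  rw [← ofReal_integral_eq_lintegral_ofReal]
  · rw [integral_fintype_prod_volume_eq_pow (fun t : ℝ => Real.exp (-(1/2) * t^2)),
      integral_gaussian, Fintype.card_fin]
    congr 1
    have e : Real.pi / (1 / 2) = 2 * Real.pi := by ring
    rw [e]
    symm
    rw [Real.sqrt_eq_iff_mul_self_eq (by positivity) (by positivity), ← mul_pow,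
      Real.mul_self_sqrt (by positivity)]
  · exact Integrable.fintype_prod (fun _ => hi)
  · exact Filter.Eventually.of_forall fun x => Finset.prod_nonneg fun i _ => (Real.exp_pos _).le

theorem gdens_mass {n : ℕ} (m : Fin n → ℝ) {S : Matrix (Fin n) (Fin n) ℝ} (hS : S.PosDef) :
    ∫⁻ x, ENNReal.ofReal (gdens m S x) = 1 := by
  obtain ⟨B, hBu, hB⟩ : ∃ B : Matrix (Fin n) (Fin n) ℝ, IsUnit B ∧ S⁻¹ = Bᵀ * B := by
    exact posDef_factor hS.inv
  have hBd : B.det ≠ 0 := by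
    simpa [isUnit_iff_ne_zero] using (Matrix.isUnit_iff_isUnit_det B).1 hBu
  have hdet : S.det = (B.det ^ 2)⁻¹ := by
    have : S⁻¹.det = B.det ^ 2 := by rw [hB, det_mul, det_transpose, sq]
    rw [← this, det_nonsing_inv, Ring.inverse_eq_inv', inv_inv]
  have hmeas : Measurable (fun x : Fin n → ℝ => ENNReal.ofReal (gdens 0 S x)) := by
    refine ((continuous_gdens2 S).comp (Continuous.prodMk_right 0)).measurable.ennreal_ofReal
  have h0 : ∀ x, gdens m S x = gdens 0 S (x - m) := by intro x; simp [gdens]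
  simp_rw [h0]
  rw [lintegral_sub_right_eq_self (fun x => ENNReal.ofReal (gdens 0 S x)) m]
  have h1 : ∀ x, ENNReal.ofReal (gdens 0 S x)
      = ENNReal.ofReal (Real.sqrt ((2 * Real.pi) ^ n * S.det))⁻¹ *
        ENNReal.ofReal (Real.exp (-(1 / 2) * (B.mulVec x ⬝ᵥ B.mulVec x))) := by
    intro x
    rw [← ENNReal.ofReal_mul (by positivity)]
    unfold gdens
    congr 3
    rw [hB, sub_zero, ← mulVec_mulVec, mulVec_transpose, dotProduct_comm, ← dotProduct_mulVec]
  simp_rw [h1]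
  have hg : Measurable (fun x : Fin n → ℝ => ENNReal.ofReal (Real.exp (-(1 / 2) * (x ⬝ᵥ x)))) := by
    refine Measurable.ennreal_ofReal ?_
    exact Continuous.measurable (by fun_prop)
  have hBm : Measurable (fun x : Fin n → ℝ => B.mulVec x) :=
    Continuous.measurable (by fun_prop)
  have hgB : Measurable (fun x : Fin n → ℝ =>
      ENNReal.ofReal (Real.exp (-(1 / 2) * (B.mulVec x ⬝ᵥ B.mulVec x)))) := hg.comp hBm
  rw [lintegral_const_mul _ hgB]
  have h2 : ∫⁻ x : Fin n → ℝ, ENNReal.ofReal (Real.exp (-(1 / 2) * (B.mulVec x ⬝ᵥ B.mulVec x)))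
      = ENNReal.ofReal |B.det⁻¹| * ENNReal.ofReal (Real.sqrt ((2 * Real.pi) ^ n)) := by
    have := Real.map_matrix_volume_pi_eq_smul_volume_pi hBd
    rw [← std_lintegral, ← smul_eq_mul, ← lintegral_smul_measure, ← this, lintegral_map hg]
    · rfl
    · exact hBm
  rw [h2, ← ENNReal.ofReal_mul (by positivity), ← ENNReal.ofReal_mul (by positivity),
    ← ENNReal.ofReal_one]
  congr 1
  rw [hdet, Real.sqrt_mul (by positivity), Real.sqrt_inv, Real.sqrt_sq_eq_abs, abs_inv]
  have : Real.sqrt ((2 * Real.pi) ^ n) ≠ 0 := by positivity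
  have : |B.det| ≠ 0 := by positivity
  field_simp

section alg
variable {n p : ℕ} {S : Matrix (Fin n) (Fin n) ℝ} {R : Matrix (Fin p) (Fin p) ℝ}

theorem T_posDef (hS : S.PosDef) (hR : R.PosDef) (H : Matrix (Fin p) (Fin n) ℝ) :
    (H * S * Hᵀ + R).PosDef := by
  have := hS.posSemidef.mul_mul_conjTranspose_same H
  simpa using hR.posSemidef_add this

theorem M_posDef (hS : S.PosDef) (hR : R.PosDef) (H : Matrix (Fin p) (Fin n) ℝ) :
    (S⁻¹ + Hᵀ * R⁻¹ * H).PosDef := by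
  have := hR.inv.posSemidef.conjTranspose_mul_mul_same H
  simpa using hS.inv.add_posSemidef this

theorem MK (hS : S.PosDef) (hR : R.PosDef) (H : Matrix (Fin p) (Fin n) ℝ) :
    (S⁻¹ + Hᵀ * R⁻¹ * H) * (S * Hᵀ * (H * S * Hᵀ + R)⁻¹) = Hᵀ * R⁻¹ := by
  have uS := (Matrix.isUnit_iff_isUnit_det _).1 hS.isUnit
  have uR := (Matrix.isUnit_iff_isUnit_det _).1 hR.isUnit
  have uT := (Matrix.isUnit_iff_isUnit_det _).1 (T_posDef hS hR H).isUnit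
  have : (S⁻¹ + Hᵀ * R⁻¹ * H) * (S * Hᵀ) = Hᵀ * R⁻¹ * (H * S * Hᵀ + R) := by
    rw [Matrix.add_mul, Matrix.mul_add, Matrix.mul_assoc _ R⁻¹ R, nonsing_inv_mul _ uR, ← Matrix.mul_assoc S⁻¹,
      nonsing_inv_mul _ uS]
    simp only [Matrix.mul_assoc, Matrix.one_mul, Matrix.mul_one]
    rw [add_comm]
  rw [← Matrix.mul_assoc, this, Matrix.mul_assoc, mul_nonsing_inv _ uT, Matrix.mul_one]

theorem MC (hS : S.PosDef) (hR : R.PosDef) (H : Matrix (Fin p) (Fin n) ℝ) :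
    (S⁻¹ + Hᵀ * R⁻¹ * H) * (S - S * Hᵀ * (H * S * Hᵀ + R)⁻¹ * H * S) = 1 := by
  have uS := (Matrix.isUnit_iff_isUnit_det _).1 hS.isUnit
  rw [mul_sub, Matrix.mul_assoc _ H S, ← Matrix.mul_assoc _ _ (H * S), MK hS hR, add_mul,
    nonsing_inv_mul _ uS]
  simp only [Matrix.mul_assoc]
  simp

theorem C_inv (hS : S.PosDef) (hR : R.PosDef) (H : Matrix (Fin p) (Fin n) ℝ) :
    (S - S * Hᵀ * (H * S * Hᵀ + R)⁻¹ * H * S)⁻¹ = (S⁻¹ + Hᵀ * R⁻¹ * H) :=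
  inv_eq_left_inv (MC hS hR H)

theorem C_posDef (hS : S.PosDef) (hR : R.PosDef) (H : Matrix (Fin p) (Fin n) ℝ) :
    (S - S * Hᵀ * (H * S * Hᵀ + R)⁻¹ * H * S).PosDef := by
  rw [← inv_eq_right_inv (MC hS hR H)]
  exact (M_posDef hS hR H).inv

theorem det_id (hS : S.PosDef) (hR : R.PosDef) (H : Matrix (Fin p) (Fin n) ℝ) :
    S.det * R.det = (H * S * Hᵀ + R).det *
      (S - S * Hᵀ * (H * S * Hᵀ + R)⁻¹ * H * S).det := by
  have uS := (Matrix.isUnit_iff_isUnit_det _).1 hS.isUnit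
  have uR := (Matrix.isUnit_iff_isUnit_det _).1 hR.isUnit
  have h1 : H * S * Hᵀ + R = R * (1 + (R⁻¹ * H) * (S * Hᵀ)) := by
    rw [mul_add, ← Matrix.mul_assoc R, ← Matrix.mul_assoc R, mul_nonsing_inv _ uR]
    simp only [Matrix.mul_assoc, Matrix.one_mul, Matrix.mul_one]
    rw [add_comm]
  have h2 : 1 + (S * Hᵀ) * (R⁻¹ * H) = S * (S⁻¹ + Hᵀ * R⁻¹ * H) := by
    rw [mul_add, mul_nonsing_inv _ uS]
    simp only [Matrix.mul_assoc]
  have h3 : (H * S * Hᵀ + R).det = R.det * (S.det * (S⁻¹ + Hᵀ * R⁻¹ * H).det) := by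
    rw [h1, det_mul, det_one_add_mul_comm, h2, det_mul]
  have h4 := congrArg det (MC hS hR H)
  rw [det_mul, det_one] at h4
  rw [h3]
  linear_combination -(S.det * R.det) * h4

theorem quad_id (hS : S.PosDef) (hR : R.PosDef) (H : Matrix (Fin p) (Fin n) ℝ)
    (u : Fin n → ℝ) (v : Fin p → ℝ) :
    u ⬝ᵥ S⁻¹ *ᵥ u + (v - H *ᵥ u) ⬝ᵥ R⁻¹ *ᵥ (v - H *ᵥ u)
      = v ⬝ᵥ (H * S * Hᵀ + R)⁻¹ *ᵥ v +
        (u - (S * Hᵀ * (H * S * Hᵀ + R)⁻¹) *ᵥ v) ⬝ᵥ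
          (S⁻¹ + Hᵀ * R⁻¹ * H) *ᵥ (u - (S * Hᵀ * (H * S * Hᵀ + R)⁻¹) *ᵥ v) := by
  have uR := (Matrix.isUnit_iff_isUnit_det _).1 hR.isUnit
  have uT := (Matrix.isUnit_iff_isUnit_det _).1 (T_posDef hS hR H).isUnit
  have hMK := MK hS hR H
  have hMt : (S⁻¹ + Hᵀ * R⁻¹ * H)ᵀ = S⁻¹ + Hᵀ * R⁻¹ * H := by
    simpa using (M_posDef hS hR H).isHermitian.eq
  have hTt : (H * S * Hᵀ + R)⁻¹ᵀ = (H * S * Hᵀ + R)⁻¹ := by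
    simpa using (T_posDef hS hR H).inv.isHermitian.eq
  have hRt : R⁻¹ᵀ = R⁻¹ := by simpa using hR.inv.isHermitian.eq
  have hSt : Sᵀ = S := by simpa using hS.isHermitian.eq
  have hKt : (S * Hᵀ * (H * S * Hᵀ + R)⁻¹)ᵀ = (H * S * Hᵀ + R)⁻¹ * H * S := by
    rw [transpose_mul, transpose_mul, hTt, hSt, transpose_transpose]
    exact (Matrix.mul_assoc _ _ _).symm
  have hKMK : (H * S * Hᵀ + R)⁻¹ * H * S * (Hᵀ * R⁻¹) = R⁻¹ - (H * S * Hᵀ + R)⁻¹ := by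
    have : (H * S * Hᵀ + R)⁻¹ * H * S * (Hᵀ * R⁻¹)
       = (H * S * Hᵀ + R)⁻¹ * ((H * S * Hᵀ + R) - R) * R⁻¹ := by
      rw [add_sub_cancel_right]; simp only [Matrix.mul_assoc]
    rw [this, mul_sub, nonsing_inv_mul _ uT, sub_mul, Matrix.mul_assoc _ R, mul_nonsing_inv _ uR,
      Matrix.one_mul, Matrix.mul_one]
  generalize (H * S * Hᵀ + R)⁻¹ = Ti at *
  generalize hM : (S⁻¹ + Hᵀ * R⁻¹ * H) = M at *
  generalize (S * Hᵀ * Ti) = K at *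
  have e1 : (K *ᵥ v) ⬝ᵥ M *ᵥ u = u ⬝ᵥ (Hᵀ * R⁻¹) *ᵥ v := by
    rw [dotProduct_mulVec, ← mulVec_transpose, hMt, mulVec_mulVec, hMK, dotProduct_comm]
  have e2 : u ⬝ᵥ M *ᵥ (K *ᵥ v) = u ⬝ᵥ (Hᵀ * R⁻¹) *ᵥ v := by
    rw [mulVec_mulVec, hMK]
  have e3 : (K *ᵥ v) ⬝ᵥ M *ᵥ (K *ᵥ v) = v ⬝ᵥ R⁻¹ *ᵥ v - v ⬝ᵥ Ti *ᵥ v := by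
    rw [mulVec_mulVec, hMK, dotProduct_comm, dotProduct_mulVec, ← mulVec_transpose, hKt,
      mulVec_mulVec, hKMK, sub_mulVec, sub_dotProduct, dotProduct_comm _ v, dotProduct_comm _ v]
  have e4 : (H *ᵥ u) ⬝ᵥ R⁻¹ *ᵥ v = u ⬝ᵥ (Hᵀ * R⁻¹) *ᵥ v := by
    rw [← mulVec_mulVec, dotProduct_mulVec u, vecMul_transpose]
  have e5 : v ⬝ᵥ R⁻¹ *ᵥ (H *ᵥ u) = u ⬝ᵥ (Hᵀ * R⁻¹) *ᵥ v := by
    rw [← e4, dotProduct_mulVec, ← mulVec_transpose, hRt, dotProduct_comm]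
  have e6 : u ⬝ᵥ M *ᵥ u = u ⬝ᵥ S⁻¹ *ᵥ u + (H *ᵥ u) ⬝ᵥ R⁻¹ *ᵥ (H *ᵥ u) := by
    rw [← hM, add_mulVec, dotProduct_add, ← mulVec_mulVec, ← mulVec_mulVec,
      dotProduct_mulVec u Hᵀ, vecMul_transpose]
  simp only [mulVec_sub, dotProduct_sub, sub_dotProduct]
  rw [e1, e2, e3, e4, e5, e6]
  ring

theorem gdens_id (hS : S.PosDef) (hR : R.PosDef) (H : Matrix (Fin p) (Fin n) ℝ)
    (m x : Fin n → ℝ) (y : Fin p → ℝ) :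
    gdens m S x * gdens 0 R (y - H *ᵥ x)
      = gdens (H *ᵥ m) (H * S * Hᵀ + R) y *
        gdens (m + (S * Hᵀ * (H * S * Hᵀ + R)⁻¹) *ᵥ (y - H *ᵥ m))
          (S - S * Hᵀ * (H * S * Hᵀ + R)⁻¹ * H * S) x := by
  have hq := quad_id hS hR H (x - m) (y - H *ᵥ m)
  have hd := det_id hS hR H
  have i1 : y - H *ᵥ m - H *ᵥ (x - m) = y - H *ᵥ x := by rw [mulVec_sub]; abel
  rw [i1] at hq
  unfold gdens
  rw [C_inv hS hR H, sub_zero, ← sub_sub x m]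
  have c : ∀ a b c d : ℝ, a * Real.exp b * (c * Real.exp d) = (a * c) * Real.exp (b + d) := by
    intros; rw [Real.exp_add]; ring
  rw [c, c, ← mul_add, ← mul_add, hq]
  congr 1
  have dS := hS.det_pos
  have dT := (T_posDef hS hR H).det_pos
  rw [← mul_inv, ← mul_inv, ← Real.sqrt_mul (by positivity), ← Real.sqrt_mul (by positivity)]
  congr 2
  linear_combination (2 * Real.pi) ^ n * (2 * Real.pi) ^ p * hd

end alg

set_option maxHeartbeats 2000000 in
/-- **The Gaussian posterior of the linear Gaussian model.**
If `X ~ N(m, Σ)` on `ℝ^n`, `W ~ N(0, R)` on `ℝ^m` independent of `X`, and `Y = HX + W`,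
then for `P_Y`-a.e. `y` the conditional distribution of `X` given `Y = y` is
`N(m + K(y − Hm), Σ − Σ Hᵀ (H Σ Hᵀ + R)⁻¹ H Σ)` with `K = Σ Hᵀ (H Σ Hᵀ + R)⁻¹`. -/
theorem gaussian_posterior {n p : ℕ} {Ω : Type*} [MeasurableSpace Ω]
    (P : Measure Ω) [IsProbabilityMeasure P]
    (X : Ω → Fin n → ℝ) (W : Ω → Fin p → ℝ)
    (hXm : Measurable X) (hWm : Measurable W)
    (m : Fin n → ℝ) (S : Matrix (Fin n) (Fin n) ℝ) (R : Matrix (Fin p) (Fin p) ℝ)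
    (hS : S.PosDef) (hR : R.PosDef)
    (hXlaw : P.map X = mvGaussian m S) (hWlaw : P.map W = mvGaussian 0 R)
    (hindep : IndepFun X W P)
    (H : Matrix (Fin p) (Fin n) ℝ)
    (Y : Ω → Fin p → ℝ) (hY : Y = fun ω => H.mulVec (X ω) + W ω)
    (K : Matrix (Fin n) (Fin p) ℝ) (hK : K = S * Hᵀ * (H * S * Hᵀ + R)⁻¹) :
    ∀ᵐ y ∂(P.map Y),
      condDistrib X Y P y
        = mvGaussian (m + K.mulVec (y - H.mulVec m))
            (S - S * Hᵀ * (H * S * Hᵀ + R)⁻¹ * H * S) := by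
  have hT := T_posDef hS hR H
  have hC := C_posDef hS hR H
  have hid := gdens_id hS hR H m
  have hCmass := fun a => gdens_mass (n := n) a hC
  set T := H * S * Hᵀ + R with hTdef
  generalize S - S * Hᵀ * T⁻¹ * H * S = C at *
  rw [← hK] at hid
  have hHm : Measurable (fun x : Fin n → ℝ => H *ᵥ x) := Continuous.measurable (by fun_prop)
  have hYm : Measurable Y := by
    rw [hY]; exact (hHm.comp hXm).add hWm
  -- measurability of densities
  have gm : ∀ {k : ℕ} (a : Fin k → ℝ) (A : Matrix (Fin k) (Fin k) ℝ),
      Measurable (fun x => ENNReal.ofReal (gdens a A x)) := fun a A =>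
    ((continuous_gdens2 A).comp (Continuous.prodMk_right a)).measurable.ennreal_ofReal
  let f : (Fin p → ℝ) → (Fin n → ℝ) → ℝ≥0∞ :=
    fun y x => ENNReal.ofReal (gdens (m + K *ᵥ (y - H *ᵥ m)) C x)
  have hf : Measurable (Function.uncurry f) := by
    have h1 : Continuous (fun q : (Fin p → ℝ) × (Fin n → ℝ) =>
        ((m + K *ᵥ (q.1 - H *ᵥ m), q.2) : (Fin n → ℝ) × (Fin n → ℝ))) := by fun_prop
    exact ((continuous_gdens2 C).comp h1).measurable.ennreal_ofReal
  let κ : Kernel (Fin p → ℝ) (Fin n → ℝ) :=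
    Kernel.withDensity (Kernel.const _ (volume : Measure (Fin n → ℝ))) f
  have hκ : ∀ y, κ y = volume.withDensity (f y) := fun y => by
    simp only [κ]
    rw [Kernel.withDensity_apply _ hf, Kernel.const_apply]
  have hfy : ∀ y, Measurable (f y) := fun y => hf.comp measurable_prodMk_left
  have hmass : ∀ y, ∫⁻ x, f y x = 1 := fun y => hCmass _
  have : IsMarkovKernel κ := ⟨fun y => ⟨by
    rw [hκ, withDensity_apply _ MeasurableSet.univ, Measure.restrict_univ, hmass]⟩⟩
  have hXW := (indepFun_iff_map_prod_eq_prod_map_map hXm.aemeasurable hWm.aemeasurable).1 hindep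
  have : SFinite (mvGaussian 0 R) := by rw [← hWlaw]; infer_instance
  -- key change of variables
  have key : ∀ F : (Fin p → ℝ) × (Fin n → ℝ) → ℝ≥0∞, Measurable F →
      ∫⁻ ω, F (Y ω, X ω) ∂P
        = ∫⁻ y, ENNReal.ofReal (gdens (H *ᵥ m) T y) * ∫⁻ x, f y x * F (y, x) := by
    intro F hF
    have hG : Measurable (fun q : (Fin n → ℝ) × (Fin p → ℝ) => F (H *ᵥ q.1 + q.2, q.1)) :=
      hF.comp (((hHm.comp measurable_fst).add measurable_snd).prodMk measurable_fst)
    have s1 : ∫⁻ ω, F (Y ω, X ω) ∂P = ∫⁻ q, F (H *ᵥ q.1 + q.2, q.1)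
        ∂((mvGaussian m S).prod (mvGaussian 0 R)) := by
      rw [← hXlaw, ← hWlaw, ← hXW, lintegral_map hG (hXm.prodMk hWm), hY]
    rw [s1, lintegral_prod _ hG.aemeasurable, mvGaussian_eq m S,
      lintegral_withDensity_eq_lintegral_mul _ (gm m S) hG.lintegral_prod_right']
    have s2 : ∀ x, ((fun x => ENNReal.ofReal (gdens m S x)) *
        fun x => ∫⁻ w, F (H *ᵥ x + w, x) ∂(mvGaussian 0 R)) x
        = ∫⁻ y, ENNReal.ofReal (gdens (H *ᵥ m) T y) * (f y x * F (y, x)) := by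
      intro x
      have hGx : Measurable (fun w => F (H *ᵥ x + w, x)) := hG.comp measurable_prodMk_left
      simp only [Pi.mul_apply]
      rw [mvGaussian_eq, lintegral_withDensity_eq_lintegral_mul _ (gm 0 R) hGx,
        ← lintegral_const_mul _ ((gm 0 R).mul hGx),
        ← lintegral_add_left_eq_self (fun y => ENNReal.ofReal (gdens (H *ᵥ m) T y) *
          (f y x * F (y, x))) (H *ᵥ x)]
      refine lintegral_congr fun w => ?_
      simp only [Pi.mul_apply]
      rw [← mul_assoc, ← mul_assoc]
      congr 1
      have := hid x (H *ᵥ x + w)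
      rw [add_sub_cancel_left] at this
      rw [← ENNReal.ofReal_mul (gdens_nonneg _ _ _), this,
        ENNReal.ofReal_mul (gdens_nonneg _ _ _)]
    rw [lintegral_congr s2, lintegral_lintegral_swap]
    · refine lintegral_congr fun y => ?_
      rw [lintegral_const_mul]
      exact (hf.comp measurable_prodMk_left).mul (hF.comp measurable_prodMk_left)
    · apply Measurable.aemeasurable
      exact ((gm _ T).comp measurable_snd).mul
        ((hf.comp measurable_swap).mul (hF.comp measurable_swap))
  have hYlaw : P.map Y = mvGaussian (H *ᵥ m) T := by
    apply Measure.ext_of_lintegral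
    intro φ hφ
    rw [lintegral_map hφ hYm, mvGaussian_eq,
      lintegral_withDensity_eq_lintegral_mul _ (gm _ T) hφ,
      key (fun q => φ q.1) (hφ.comp measurable_fst)]
    refine lintegral_congr fun y => ?_
    simp only [Pi.mul_apply]
    rw [lintegral_mul_const _ (hfy y), hmass, one_mul]
  have hjoint : P.map (fun ω => (Y ω, X ω)) = P.map Y ⊗ₘ κ := by
    apply Measure.ext_of_lintegral
    intro F hF
    rw [lintegral_map hF (hYm.prodMk hXm), key F hF, Measure.lintegral_compProd hF, hYlaw,
      mvGaussian_eq, lintegral_withDensity_eq_lintegral_mul _ (gm _ T)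
        hF.lintegral_kernel_prod_right']
    refine lintegral_congr fun y => ?_
    simp only [Pi.mul_apply]
    have hFy : Measurable (fun x => F (y, x)) := hF.comp measurable_prodMk_left
    rw [hκ, lintegral_withDensity_eq_lintegral_mul _ (hfy y) hFy]
    rfl
  filter_upwards [condDistrib_ae_eq_of_measure_eq_compProd_of_measurable hYm hXm hjoint] with y hy
  rw [hy, hκ]
  rfl
end

section
/- Let X ~ N(m, Σ) on ℝ^n with Σ symmetric positive definite, W ~ N(0, R) on ℝ^m with R symmetric positive definite, X and W independent, Y := HX + W, and K := ΣHᵀ(HΣHᵀ+R)⁻¹. Let X̄ and W̄ be independent copies of X and W respectively (with X̄, W̄, and (X,W) mutually independent), set Ȳ := HX̄ + W̄, and define X̄_{|y} := X̄ + K(y − Ȳ). Then for P_Y-almost every y, the law of X̄_{|y} equals the conditional distribution P_{X|Y}(·|y) of X given Y = y; equivalently, y ↦ law(X̄ + K(y − Ȳ)) is a regular conditional distribution of X given Y. -/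
open MeasureTheory ProbabilityTheory Matrix
open scoped Matrix ENNReal

lemma enkf_alg {n p : ℕ} (S : Matrix (Fin n) (Fin n) ℝ) (R : Matrix (Fin p) (Fin p) ℝ)
    (hS : S.PosDef) (hR : R.PosDef) (H : Matrix (Fin p) (Fin n) ℝ)
    (K : Matrix (Fin n) (Fin p) ℝ) (hK : K = S * Hᵀ * (H * S * Hᵀ + R)⁻¹) :
    S⁻¹ * K = Hᵀ * R⁻¹ * (1 - H * K) := by
  have hT : (H * S * Hᵀ + R).PosDef := by
    have := hS.posSemidef.mul_mul_conjTranspose_same H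
    rw [conjTranspose_eq_transpose_of_trivial] at this
    exact hR.posSemidef_add this
  have hSu : IsUnit S.det := (Matrix.isUnit_iff_isUnit_det _).1 hS.isUnit
  have hRu : IsUnit R.det := (Matrix.isUnit_iff_isUnit_det _).1 hR.isUnit
  have hTu : IsUnit (H * S * Hᵀ + R).det := (Matrix.isUnit_iff_isUnit_det _).1 hT.isUnit
  have h1 : S⁻¹ * K = Hᵀ * (H * S * Hᵀ + R)⁻¹ := by
    rw [hK, ← Matrix.mul_assoc, ← Matrix.mul_assoc, nonsing_inv_mul _ hSu, Matrix.one_mul]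
  have h2 : 1 - H * K = R * (H * S * Hᵀ + R)⁻¹ := by
    have : H * K = (H * S * Hᵀ) * (H * S * Hᵀ + R)⁻¹ := by
      rw [hK]; simp only [Matrix.mul_assoc]
    rw [this, sub_eq_iff_eq_add', ← Matrix.add_mul, mul_nonsing_inv _ hTu]
  rw [h1, h2, Matrix.mul_assoc Hᵀ R⁻¹, ← Matrix.mul_assoc R⁻¹, nonsing_inv_mul _ hRu, Matrix.one_mul]

lemma symm_form {n : ℕ} {A : Matrix (Fin n) (Fin n) ℝ} (hA : Aᵀ = A) (u v : Fin n → ℝ) :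
    (u + v) ⬝ᵥ A *ᵥ (u + v) = u ⬝ᵥ A *ᵥ u + v ⬝ᵥ A *ᵥ v + 2 * (u ⬝ᵥ A *ᵥ v) := by
  have : v ⬝ᵥ A *ᵥ u = u ⬝ᵥ A *ᵥ v := by
    rw [dotProduct_mulVec, ← mulVec_transpose, hA, dotProduct_comm]
  simp only [mulVec_add, dotProduct_add, add_dotProduct, this]; ring

lemma enkf_quad {n p : ℕ} (m : Fin n → ℝ)
    (S : Matrix (Fin n) (Fin n) ℝ) (R : Matrix (Fin p) (Fin p) ℝ)
    (hS : S.PosDef) (hR : R.PosDef) (H : Matrix (Fin p) (Fin n) ℝ)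
    (K : Matrix (Fin n) (Fin p) ℝ) (hK : K = S * Hᵀ * (H * S * Hᵀ + R)⁻¹)
    (y : Fin p → ℝ) (z : Fin n → ℝ) :
    ((z + K *ᵥ y) - m) ⬝ᵥ S⁻¹ *ᵥ ((z + K *ᵥ y) - m)
      + ((y - H *ᵥ (z + K *ᵥ y)) - 0) ⬝ᵥ R⁻¹ *ᵥ ((y - H *ᵥ (z + K *ᵥ y)) - 0)
    = ((K *ᵥ y) ⬝ᵥ S⁻¹ *ᵥ (K *ᵥ y)
        + ((1 - H * K) *ᵥ y) ⬝ᵥ R⁻¹ *ᵥ ((1 - H * K) *ᵥ y) - 2 * (m ⬝ᵥ S⁻¹ *ᵥ (K *ᵥ y)))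
      + ((z - m) ⬝ᵥ S⁻¹ *ᵥ (z - m) + (-(H *ᵥ z)) ⬝ᵥ R⁻¹ *ᵥ (-(H *ᵥ z))) := by
  have hS' : (S⁻¹)ᵀ = S⁻¹ := by
    have := hS.inv.isHermitian.eq
    rwa [conjTranspose_eq_transpose_of_trivial] at this
  have hR' : (R⁻¹)ᵀ = R⁻¹ := by
    have := hR.inv.isHermitian.eq
    rwa [conjTranspose_eq_transpose_of_trivial] at this
  have e1 : (z + K *ᵥ y) - m = (z - m) + K *ᵥ y := by abel
  have e2 : (y - H *ᵥ (z + K *ᵥ y)) - 0 = -(H *ᵥ z) + (1 - H * K) *ᵥ y := by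
    rw [sub_mulVec, one_mulVec, mulVec_add, mulVec_mulVec]; abel
  have e3 : (-(H *ᵥ z)) ⬝ᵥ R⁻¹ *ᵥ ((1 - H * K) *ᵥ y) = - (z ⬝ᵥ S⁻¹ *ᵥ (K *ᵥ y)) := by
    rw [neg_dotProduct, mulVec_mulVec, mulVec_mulVec _ S⁻¹, enkf_alg S R hS hR H K hK, Matrix.mul_assoc,
      ← mulVec_mulVec _ Hᵀ, dotProduct_mulVec z, vecMul_transpose]
  rw [e1, e2, symm_form hS', symm_form hR', e3, sub_dotProduct z m (S⁻¹ *ᵥ (K *ᵥ y))]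
  ring

lemma map_withDensity_mp {α β : Type*} [MeasurableSpace α] [MeasurableSpace β]
    {μ : Measure α} {ν : Measure β} {φ : α → β} (h : MeasurePreserving φ μ ν)
    {F : β → ℝ≥0∞} (hF : Measurable F) :
    (μ.withDensity (F ∘ φ)).map φ = ν.withDensity F := by
  ext s hs
  rw [Measure.map_apply h.measurable hs, withDensity_apply _ (h.measurable hs),
    withDensity_apply _ hs, ← h.setLIntegral_comp_preimage hs hF]
  rfl

lemma phi_mp {n p : ℕ} (H : Matrix (Fin p) (Fin n) ℝ) (K : Matrix (Fin n) (Fin p) ℝ) :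
    MeasurePreserving (fun q : (Fin p → ℝ) × (Fin n → ℝ) =>
      (q.2 + K *ᵥ q.1, q.1 - H *ᵥ (q.2 + K *ᵥ q.1)))
      ((volume : Measure (Fin p → ℝ)).prod (volume : Measure (Fin n → ℝ)))
      ((volume : Measure (Fin n → ℝ)).prod (volume : Measure (Fin p → ℝ))) := by
  have cK : Continuous fun y => K *ᵥ y := by fun_prop
  have cH : Continuous fun y => H *ᵥ y := by fun_prop
  have h1 : MeasurePreserving (fun q : (Fin p → ℝ) × (Fin n → ℝ) => (id q.1, q.2 + K *ᵥ q.1))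
      ((volume : Measure (Fin p → ℝ)).prod (volume : Measure (Fin n → ℝ)))
      ((volume : Measure (Fin p → ℝ)).prod (volume : Measure (Fin n → ℝ))) := by
    refine (MeasurePreserving.id _).skew_product (g := fun y z => z + K *ᵥ y) ?_ ?_
    · exact Continuous.measurable (by unfold Function.uncurry; fun_prop)
    · exact ae_of_all _ fun y => map_add_right_eq_self _ _
  have h2 : MeasurePreserving (fun q : (Fin n → ℝ) × (Fin p → ℝ) => (id q.1, q.2 - H *ᵥ q.1))
      ((volume : Measure (Fin n → ℝ)).prod (volume : Measure (Fin p → ℝ)))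
      ((volume : Measure (Fin n → ℝ)).prod (volume : Measure (Fin p → ℝ))) := by
    refine (MeasurePreserving.id _).skew_product (g := fun y z => z - H *ᵥ y) ?_ ?_
    · exact Continuous.measurable (by unfold Function.uncurry; fun_prop)
    · exact ae_of_all _ fun y => map_sub_right_eq_self _ _
  exact h2.comp (Measure.measurePreserving_swap.comp h1)

lemma indep_of_prod {Ω α β : Type*} [MeasurableSpace Ω] [MeasurableSpace α] [MeasurableSpace β]
    (P : Measure Ω) [IsProbabilityMeasure P] {f : Ω → α} {g : Ω → β} (hf : Measurable f)
    (hg : Measurable g) (μ : Measure α) (ν : Measure β) [SFinite μ] [SFinite ν]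
    (h : P.map (fun ω => (f ω, g ω)) = μ.prod ν) :
    P.map (fun ω => (f ω, g ω)) = (P.map f).prod (P.map g) := by
  have h1 : P.map f = ν Set.univ • μ := by
    rw [← Measure.map_fst_prod, ← h, Measure.map_map measurable_fst (hf.prodMk hg)]; rfl
  have h2 : P.map g = μ Set.univ • ν := by
    rw [← Measure.map_snd_prod, ← h, Measure.map_map measurable_snd (hf.prodMk hg)]; rfl
  have h3 : μ Set.univ * ν Set.univ = 1 := by
    rw [← Measure.prod_prod, ← h, Set.univ_prod_univ]
    have := Measure.isProbabilityMeasure_map (μ := P) (hf.prodMk hg).aemeasurable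
    exact measure_univ
  rw [h1, h2, Measure.prod_smul_left, Measure.prod_smul_right, smul_smul, mul_comm, h3, one_smul, h]

lemma mvGaussian_density_meas {n : ℕ} (m : Fin n → ℝ) (S : Matrix (Fin n) (Fin n) ℝ) :
    Measurable fun x : Fin n → ℝ => ENNReal.ofReal ((Real.sqrt ((2 * Real.pi) ^ n * S.det))⁻¹ *
      Real.exp (-(1 / 2) * ((x - m) ⬝ᵥ (S⁻¹).mulVec (x - m)))) := by
  refine ENNReal.measurable_ofReal.comp (Continuous.measurable ?_)
  fun_prop

lemma enkf_prod {n p : ℕ} (m : Fin n → ℝ)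
    (S : Matrix (Fin n) (Fin n) ℝ) (R : Matrix (Fin p) (Fin p) ℝ)
    (hS : S.PosDef) (hR : R.PosDef) (H : Matrix (Fin p) (Fin n) ℝ)
    (K : Matrix (Fin n) (Fin p) ℝ) (hK : K = S * Hᵀ * (H * S * Hᵀ + R)⁻¹) :
    ∃ (a : (Fin p → ℝ) → ℝ) (b : (Fin n → ℝ) → ℝ),
      ((volume.withDensity fun y => ENNReal.ofReal (a y)).prod
        (volume.withDensity fun z => ENNReal.ofReal (b z))).map
        (fun q : (Fin p → ℝ) × (Fin n → ℝ) =>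
          (q.2 + K *ᵥ q.1, q.1 - H *ᵥ (q.2 + K *ᵥ q.1)))
      = (mvGaussian m S).prod (mvGaussian 0 R) := by
  refine ⟨fun y => (Real.sqrt ((2 * Real.pi) ^ n * S.det))⁻¹ *
      Real.exp (-(1 / 2) * ((K *ᵥ y) ⬝ᵥ S⁻¹ *ᵥ (K *ᵥ y)
        + ((1 - H * K) *ᵥ y) ⬝ᵥ R⁻¹ *ᵥ ((1 - H * K) *ᵥ y) - 2 * (m ⬝ᵥ S⁻¹ *ᵥ (K *ᵥ y)))),
    fun z => (Real.sqrt ((2 * Real.pi) ^ p * R.det))⁻¹ *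
      Real.exp (-(1 / 2) * ((z - m) ⬝ᵥ S⁻¹ *ᵥ (z - m) + (-(H *ᵥ z)) ⬝ᵥ R⁻¹ *ᵥ (-(H *ᵥ z)))), ?_⟩
  rw [mvGaussian, mvGaussian,
    prod_withDensity (mvGaussian_density_meas m S) (mvGaussian_density_meas 0 R),
    prod_withDensity, ← map_withDensity_mp (phi_mp H K)]
  · congr 2
    funext ⟨y, z⟩
    simp only [Function.comp]
    rw [← ENNReal.ofReal_mul (by positivity), ← ENNReal.ofReal_mul (by positivity)]
    congr 1
    have := enkf_quad m S R hS hR H K hK y z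
    rw [mul_mul_mul_comm, mul_mul_mul_comm (Real.sqrt ((2 * Real.pi) ^ n * S.det))⁻¹ (Real.exp (-(1 / 2) * (z + K *ᵥ y - m) ⬝ᵥ S⁻¹ *ᵥ (z + K *ᵥ y - m))),
      ← Real.exp_add, ← Real.exp_add, ← mul_add, ← mul_add,
      this]
  · exact ((mvGaussian_density_meas m S).comp measurable_fst).mul
      ((mvGaussian_density_meas 0 R).comp measurable_snd)
  · refine ENNReal.measurable_ofReal.comp (Continuous.measurable ?_)
    fun_prop
  · refine ENNReal.measurable_ofReal.comp (Continuous.measurable ?_)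
    fun_prop

lemma cond_of_indep {Ω : Type*} [MeasurableSpace Ω] {n p : ℕ}
    (P : Measure Ω) [IsProbabilityMeasure P] {X : Ω → Fin n → ℝ} {Y : Ω → Fin p → ℝ}
    (hX : Measurable X) (hY : Measurable Y) (K : Matrix (Fin n) (Fin p) ℝ)
    (h : P.map (fun ω => (Y ω, X ω - K *ᵥ Y ω))
      = (P.map Y).prod (P.map fun ω => X ω - K *ᵥ Y ω)) :
    ∀ᵐ y ∂(P.map Y), (P.map fun ω => X ω - K *ᵥ Y ω).map (fun z => z + K *ᵥ y)
      = condDistrib X Y P y := by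
  have cK : Measurable fun y => K *ᵥ y := Continuous.measurable (by fun_prop)
  have hZ : Measurable fun ω => X ω - K *ᵥ Y ω := hX.sub (cK.comp hY)
  have hg : Measurable fun q : (Fin p → ℝ) × (Fin n → ℝ) => q.2 + K *ᵥ q.1 :=
    measurable_snd.add (cK.comp measurable_fst)
  have := Measure.isProbabilityMeasure_map (μ := P) hZ.aemeasurable
  have := Measure.isProbabilityMeasure_map (μ := P) hY.aemeasurable
  set ν := P.map fun ω => X ω - K *ᵥ Y ω with hν
  let κ : Kernel (Fin p → ℝ) (Fin n → ℝ) :=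
    (Kernel.id ×ₖ Kernel.const (Fin p → ℝ) ν).map (fun q => q.2 + K *ᵥ q.1)
  have : IsMarkovKernel κ := Kernel.IsMarkovKernel.map _ hg
  have hκ : ∀ y, κ y = ν.map (fun z => z + K *ᵥ y) := by
    intro y
    simp only [κ]
    rw [Kernel.map_apply _ hg, Kernel.prod_apply, Kernel.id_apply, Kernel.const_apply,
      Measure.dirac_prod, Measure.map_map hg (by fun_prop)]
    rfl
  have hj : P.map (fun ω => (Y ω, X ω)) = P.map Y ⊗ₘ κ := by
    have e : (fun ω => (Y ω, X ω)) = (fun q : (Fin p → ℝ) × (Fin n → ℝ) => (q.1, q.2 + K *ᵥ q.1))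
        ∘ (fun ω => (Y ω, X ω - K *ᵥ Y ω)) := by
      funext ω; simp
    rw [e, ← Measure.map_map (measurable_fst.prodMk hg) (hY.prodMk hZ), h]
    ext s hs
    rw [Measure.map_apply (measurable_fst.prodMk hg) hs, Measure.compProd_apply hs,
      Measure.prod_apply (measurable_fst.prodMk hg hs)]
    refine lintegral_congr fun y => ?_
    rw [hκ, Measure.map_apply (measurable_add_const _) (measurable_prodMk_left hs)]
    rfl
  filter_upwards [condDistrib_ae_eq_of_measure_eq_compProd Y hX.aemeasurable hj] with y hy
  rw [hy, hκ]


/-- **Exactness of the EnKF Bayesian update in the linear Gaussian setting.**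
Let `X ~ N(m, Σ)`, `W ~ N(0, R)` independent, `Y = HX + W`, and
`K = Σ Hᵀ (H Σ Hᵀ + R)⁻¹`. Let `X̄, W̄` be independent copies of `X, W` with
`X̄`, `W̄`, `(X, W)` mutually independent, and `Ȳ = H X̄ + W̄`. Then for `P_Y`-a.e. `y`,
the law of `X̄_{|y} := X̄ + K (y − Ȳ)` equals the conditional distribution of `X`
given `Y = y`. -/
theorem enkf_update_exact {n p : ℕ} {Ω : Type*} [MeasurableSpace Ω]
    (P : Measure Ω) [IsProbabilityMeasure P]
    (X : Ω → Fin n → ℝ) (W : Ω → Fin p → ℝ)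
    (hXm : Measurable X) (hWm : Measurable W)
    (m : Fin n → ℝ) (S : Matrix (Fin n) (Fin n) ℝ) (R : Matrix (Fin p) (Fin p) ℝ)
    (hS : S.PosDef) (hR : R.PosDef)
    (hXlaw : P.map X = mvGaussian m S) (hWlaw : P.map W = mvGaussian 0 R)
    (hindep : IndepFun X W P)
    (H : Matrix (Fin p) (Fin n) ℝ)
    (Y : Ω → Fin p → ℝ) (hY : Y = fun ω => H.mulVec (X ω) + W ω)
    (K : Matrix (Fin n) (Fin p) ℝ) (hK : K = S * Hᵀ * (H * S * Hᵀ + R)⁻¹)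
    (Xb : Ω → Fin n → ℝ) (Wb : Ω → Fin p → ℝ)
    (hXbm : Measurable Xb) (hWbm : Measurable Wb)
    (hXblaw : P.map Xb = P.map X) (hWblaw : P.map Wb = P.map W)
    -- `X̄`, `W̄`, and `(X, W)` are mutually independent:
    (hindep1 : IndepFun Xb Wb P)
    (hindep2 : IndepFun (fun ω => (Xb ω, Wb ω)) (fun ω => (X ω, W ω)) P)
    (Yb : Ω → Fin p → ℝ) (hYb : Yb = fun ω => H.mulVec (Xb ω) + Wb ω) :
    ∀ᵐ y ∂(P.map Y),
      P.map (fun ω => Xb ω + K.mulVec (y - Yb ω)) = condDistrib X Y P y := by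
  have cK : Measurable fun y => K *ᵥ y := Continuous.measurable (by fun_prop)
  have cH : Measurable fun y => H *ᵥ y := Continuous.measurable (by fun_prop)
  have hYm : Measurable Y := by rw [hY]; exact (cH.comp hXm).add hWm
  have hZ : Measurable fun ω => X ω - K *ᵥ Y ω := hXm.sub (cK.comp hYm)
  have hXW : P.map (fun ω => (X ω, W ω)) = (P.map X).prod (P.map W) :=
    (indepFun_iff_map_prod_eq_prod_map_map hXm.aemeasurable hWm.aemeasurable).1 hindep
  have hXWb : P.map (fun ω => (Xb ω, Wb ω)) = P.map (fun ω => (X ω, W ω)) := by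
    rw [(indepFun_iff_map_prod_eq_prod_map_map hXbm.aemeasurable hWbm.aemeasurable).1 hindep1,
      hXW, hXblaw, hWblaw]
  obtain ⟨a, b, hab⟩ := enkf_prod m S R hS hR H K hK
  have hψ : Measurable fun q : (Fin n → ℝ) × (Fin p → ℝ) =>
      (H *ᵥ q.1 + q.2, q.1 - K *ᵥ (H *ᵥ q.1 + q.2)) := Continuous.measurable (by fun_prop)
  have hφ : Measurable fun q : (Fin p → ℝ) × (Fin n → ℝ) =>
      (q.2 + K *ᵥ q.1, q.1 - H *ᵥ (q.2 + K *ᵥ q.1)) := Continuous.measurable (by fun_prop)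
  have hYZ : P.map (fun ω => (Y ω, X ω - K *ᵥ Y ω)) =
      (volume.withDensity fun y => ENNReal.ofReal (a y)).prod
        (volume.withDensity fun z => ENNReal.ofReal (b z)) := by
    have e : (fun ω => (Y ω, X ω - K *ᵥ Y ω)) = (fun q : (Fin n → ℝ) × (Fin p → ℝ) =>
      (H *ᵥ q.1 + q.2, q.1 - K *ᵥ (H *ᵥ q.1 + q.2))) ∘ fun ω => (X ω, W ω) := by
      rw [hY]; rfl
    rw [e, ← Measure.map_map hψ (hXm.prodMk hWm), hXW, hXlaw, hWlaw, ← hab,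
      Measure.map_map hψ hφ]
    convert Measure.map_id
    funext ⟨y, z⟩
    simp
  filter_upwards [cond_of_indep P hXm hYm K (indep_of_prod P hYm hZ _ _ hYZ)] with y hy
  rw [← hy]
  have hτ : Measurable fun q : (Fin n → ℝ) × (Fin p → ℝ) =>
      q.1 + K *ᵥ (y - (H *ᵥ q.1 + q.2)) := Continuous.measurable (by fun_prop)
  have e1 : (fun ω => Xb ω + K *ᵥ (y - Yb ω)) = (fun q : (Fin n → ℝ) × (Fin p → ℝ) =>
      q.1 + K *ᵥ (y - (H *ᵥ q.1 + q.2))) ∘ fun ω => (Xb ω, Wb ω) := by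
    rw [hYb]; rfl
  rw [e1, ← Measure.map_map hτ (hXbm.prodMk hWbm), hXWb, Measure.map_map hτ (hXm.prodMk hWm),
    Measure.map_map (measurable_add_const _) hZ]
  congr 1
  funext ω
  simp only [Function.comp, hY, mulVec_sub]
  abel
end

section
/- Let X be a random vector on ℝ^n with law P_X, let h : ℝ^n → ℝ be bounded and measurable with ĥ := E[h(X)], and for Δt > 0 let ΔW ~ N(0, Δt) be a scalar Gaussian independent of X, ΔY := h(X)Δt + ΔW, and let X̄ be an independent copy of X, independent of (X, ΔW). Let φ ∈ C³(ℝ^n) be bounded with bounded derivatives up to order three, ψ ∈ C²(ℝ^n) bounded with bounded derivatives up to order two, and κ, u : ℝ^n → ℝ^n bounded and measurable. Define f(x, y) := φ(x)y + ψ(x)Δt, T(x, y) := x + κ(x)y + u(x)Δt, the objective J(f,T) := E[f(X, ΔY)] + E[½|T(X̄, ΔY) − X̄|² − f(T(X̄, ΔY), ΔY)], and J₁(φ, κ) := E[½|κ(X) − ∇φ(X)|² − ½|∇φ(X)|² + φ(X)(h(X) − ĥ)]. Then there exist constants C > 0 and δ > 0 (depending on the bounds on φ, ψ, κ, u, h)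 such that for all Δt ∈ (0, δ]: |J(f, T) − J₁(φ, κ)·Δt| ≤ C·Δt². -/
open MeasureTheory ProbabilityTheory

lemma fpf_gauss_int (v : NNReal) (k : ℕ) :
    Integrable (fun x : ℝ => x ^ k) (gaussianReal 0 v) := by
  have h1 := (memLp_id_gaussianReal (μ := 0) (v := v) (k : NNReal))
  have h2 := MemLp.integrable_norm_pow' (p := k) (f := (id : ℝ → ℝ)) (by simpa using h1)
  refine h2.mono' (by fun_prop) ?_
  filter_upwards with x
  simp

lemma fpf_gauss1 (v : NNReal) : ∫ x, x ∂(gaussianReal 0 v) = 0 := integral_id_gaussianReal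

lemma fpf_gauss2 (v : NNReal) : ∫ x, x ^ 2 ∂(gaussianReal 0 v) = v := by
  have := variance_fun_id_gaussianReal (μ := 0) (v := v)
  rw [variance_eq_integral (by fun_prop)] at this
  simpa using this

lemma fpf_gauss3 (v : NNReal) : ∫ x, x ^ 3 ∂(gaussianReal 0 v) = 0 := by
  have h1 : ∫ x, x ^ 3 ∂(gaussianReal 0 v) = ∫ x, (-x) ^ 3 ∂(gaussianReal 0 v) := by
    have h2 := gaussianReal_map_neg (μ := 0) (v := v)
    rw [neg_zero] at h2
    conv_lhs => rw [← h2]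
    rw [integral_map (by fun_prop) (by fun_prop)]
  have h3 : ∫ x, (-x) ^ 3 ∂(gaussianReal 0 v) = - ∫ x, x ^ 3 ∂(gaussianReal 0 v) := by
    rw [← integral_neg]; congr 1; ext x; ring
  linarith

lemma fpf_gauss4 (t : ℝ) (ht : 0 < t) : ∫ x, x ^ 4 ∂(gaussianReal 0 t.toNNReal)
    = t ^ 2 * ∫ x, x ^ 4 ∂(gaussianReal 0 1) := by
  have h2 := gaussianReal_map_const_mul (μ := 0) (v := 1) (Real.sqrt t)
  have h3 : (gaussianReal 0 1).map (Real.sqrt t * ·) = gaussianReal 0 t.toNNReal := by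
    rw [h2]
    congr 1
    · simp
    · ext; simp [Real.sq_sqrt ht.le, ht.le]
  rw [← h3, integral_map (by fun_prop) (by fun_prop), ← integral_const_mul]
  congr 1; ext x
  have := Real.sq_sqrt ht.le
  calc (√t * x) ^ 4 = (√t ^ 2) ^ 2 * x ^ 4 := by ring
    _ = _ := by rw [this]

set_option maxSynthPendingDepth 3

section taylor
variable {E F : Type*} [NormedAddCommGroup E] [NormedSpace ℝ E]
  [NormedAddCommGroup F] [NormedSpace ℝ F]

lemma fpf_t0 (f : E → F) (hf : Differentiable ℝ f) (M : ℝ) (hM : ∀ x, ‖fderiv ℝ f x‖ ≤ M)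
    (x v : E) : ‖f (x + v) - f x‖ ≤ M * ‖v‖ := by
  have := Convex.norm_image_sub_le_of_norm_fderiv_le (𝕜 := ℝ) (f := f) (s := Set.univ) (C := M)
    (fun x _ => hf x) (fun x _ => hM x) convex_univ (Set.mem_univ x) (Set.mem_univ (x + v))
  simpa using this

lemma fpf_t1 (f : E → F) (hf : Differentiable ℝ f) (hf' : Differentiable ℝ (fderiv ℝ f))
    (M : ℝ) (hM : ∀ x, ‖fderiv ℝ (fderiv ℝ f) x‖ ≤ M)
    (x v : E) : ‖f (x + v) - f x - fderiv ℝ f x v‖ ≤ M * ‖v‖ ^ 2 := by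
  have hM0 : 0 ≤ M := (norm_nonneg _).trans (hM x)
  have := norm_image_sub_le_of_norm_deriv_le_segment_01'
    (f := fun s : ℝ => f (x + s • v) - s • fderiv ℝ f x v)
    (f' := fun s : ℝ => fderiv ℝ f (x + s • v) v - fderiv ℝ f x v) (C := M * ‖v‖ ^ 2) ?_ ?_
  · refine le_of_eq_of_le ?_ this
    congr 1; simp; abel
  · intro s _
    refine HasDerivAt.hasDerivWithinAt ?_
    have h1 : HasDerivAt (fun s : ℝ => x + s • v) v s := by
      simpa using ((hasDerivAt_id s).smul_const v).const_add x
    have h2 := (hf (x + s • v)).hasFDerivAt.comp_hasDerivAt s h1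
    have h3 : HasDerivAt (fun s : ℝ => s • fderiv ℝ f x v) (fderiv ℝ f x v) s := by
      simpa using ((hasDerivAt_id s).smul_const (fderiv ℝ f x v))
    exact h2.sub h3
  · intro s hs
    rw [← sub_apply]
    refine (ContinuousLinearMap.le_opNorm _ _).trans ?_
    have h1 := fpf_t0 (fderiv ℝ f) hf' M hM x (s • v)
    rw [norm_smul, Real.norm_of_nonneg hs.1] at h1
    have : M * (s * ‖v‖) ≤ M * ‖v‖ := by
      refine mul_le_mul_of_nonneg_left ?_ hM0
      nlinarith [norm_nonneg v, hs.2.le]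
    calc _ ≤ (M * ‖v‖) * ‖v‖ := by gcongr; linarith
      _ = _ := by ring

lemma fpf_t2 (f : E → F) (hf : Differentiable ℝ f) (hf' : Differentiable ℝ (fderiv ℝ f))
    (hf'' : Differentiable ℝ (fderiv ℝ (fderiv ℝ f)))
    (M : ℝ) (hM : ∀ x, ‖fderiv ℝ (fderiv ℝ (fderiv ℝ f)) x‖ ≤ M)
    (x v : E) : ‖f (x + v) - f x - fderiv ℝ f x v
      - (1 / 2 : ℝ) • fderiv ℝ (fderiv ℝ f) x v v‖ ≤ M * ‖v‖ ^ 3 := by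
  have hM0 : 0 ≤ M := (norm_nonneg _).trans (hM x)
  have := norm_image_sub_le_of_norm_deriv_le_segment_01'
    (f := fun s : ℝ => f (x + s • v) - s • fderiv ℝ f x v
      - (s ^ 2 / 2) • fderiv ℝ (fderiv ℝ f) x v v)
    (f' := fun s : ℝ => fderiv ℝ f (x + s • v) v - fderiv ℝ f x v
      - s • fderiv ℝ (fderiv ℝ f) x v v) (C := M * ‖v‖ ^ 3) ?_ ?_
  · refine le_of_eq_of_le ?_ this
    congr 1; simp; abel
  · intro s _
    refine HasDerivAt.hasDerivWithinAt ?_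
    have h1 : HasDerivAt (fun s : ℝ => x + s • v) v s := by
      simpa using ((hasDerivAt_id s).smul_const v).const_add x
    have h2 := (hf (x + s • v)).hasFDerivAt.comp_hasDerivAt s h1
    have h3 : HasDerivAt (fun s : ℝ => s • fderiv ℝ f x v) (fderiv ℝ f x v) s := by
      simpa using ((hasDerivAt_id s).smul_const (fderiv ℝ f x v))
    have h4 : HasDerivAt (fun s : ℝ => s ^ 2 / 2) s s := by
      have := (hasDerivAt_pow 2 s).div_const 2
      simpa using this
    exact (h2.sub h3).sub (h4.smul_const _)
  · intro s hs
    have h1 := fpf_t1 (fderiv ℝ f) hf' hf'' M hM x (s • v)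
    have e : fderiv ℝ f (x + s • v) v - fderiv ℝ f x v - s • fderiv ℝ (fderiv ℝ f) x v v
      = (fderiv ℝ f (x + s • v) - fderiv ℝ f x - fderiv ℝ (fderiv ℝ f) x (s • v)) v := by simp
    rw [e]
    refine (ContinuousLinearMap.le_opNorm _ _).trans ?_
    rw [norm_smul, Real.norm_of_nonneg hs.1] at h1
    have : M * (s * ‖v‖) ^ 2 ≤ M * ‖v‖ ^ 2 := by
      refine mul_le_mul_of_nonneg_left ?_ hM0
      refine pow_le_pow_left₀ (mul_nonneg hs.1 (norm_nonneg v)) ?_ 2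
      nlinarith [norm_nonneg v, hs.2.le]
    calc _ ≤ (M * ‖v‖ ^ 2) * ‖v‖ := by gcongr; linarith
      _ = _ := by ring
end taylor

/-- second-order expansion bound along `v = y k + t u`. -/
lemma fpf_expand {n : ℕ} (φ : (Fin n → ℝ) → ℝ) (hφ : ContDiff ℝ 3 φ)
    (M : ℝ) (hφb : ∀ k : ℕ, k ≤ 3 → ∀ x, ‖iteratedFDeriv ℝ k φ x‖ ≤ M) :
    (∀ x, |φ x| ≤ M) ∧ (∀ x, ‖fderiv ℝ φ x‖ ≤ M) ∧ (∀ x, ‖fderiv ℝ (fderiv ℝ φ) x‖ ≤ M) ∧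
    Continuous (fderiv ℝ φ) ∧ Continuous (fderiv ℝ (fderiv ℝ φ)) ∧
    ∀ x v, |φ (x + v) - φ x - fderiv ℝ φ x v
      - (1 / 2 : ℝ) * fderiv ℝ (fderiv ℝ φ) x v v| ≤ M * ‖v‖ ^ 3 := by
  have c1 : ContDiff ℝ 2 (fderiv ℝ φ) := hφ.fderiv_right (by norm_num)
  have c2 : ContDiff ℝ 1 (fderiv ℝ (fderiv ℝ φ)) := c1.fderiv_right (by norm_num)
  have b3 : ∀ x, ‖fderiv ℝ (fderiv ℝ (fderiv ℝ φ)) x‖ ≤ M := fun x => by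
    have := hφb 3 le_rfl x
    rwa [← norm_iteratedFDeriv_fderiv, ← norm_iteratedFDeriv_fderiv,
      ← norm_iteratedFDeriv_fderiv, norm_iteratedFDeriv_zero] at this
  have b2 : ∀ x, ‖fderiv ℝ (fderiv ℝ φ) x‖ ≤ M := fun x => by
    have := hφb 2 (by norm_num) x
    rwa [← norm_iteratedFDeriv_fderiv, ← norm_iteratedFDeriv_fderiv,
      norm_iteratedFDeriv_zero] at this
  have b1 : ∀ x, ‖fderiv ℝ φ x‖ ≤ M := fun x => by
    have := hφb 1 (by norm_num) x
    rwa [← norm_iteratedFDeriv_fderiv, norm_iteratedFDeriv_zero] at this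
  refine ⟨fun x => by simpa using hφb 0 (by norm_num) x, b1, b2, c1.continuous, c2.continuous, ?_⟩
  intro x v
  exact fpf_t2 φ (hφ.differentiable (by norm_num)) (c1.differentiable (by norm_num))
    (c2.differentiable (by norm_num)) M b3 x v

lemma fpf_expand1 {n : ℕ} (φ : (Fin n → ℝ) → ℝ) (hφ : ContDiff ℝ 2 φ)
    (M : ℝ) (hφb : ∀ k : ℕ, k ≤ 2 → ∀ x, ‖iteratedFDeriv ℝ k φ x‖ ≤ M) :
    (∀ x, |φ x| ≤ M) ∧ (∀ x, ‖fderiv ℝ φ x‖ ≤ M) ∧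
    Continuous (fderiv ℝ φ) ∧
    ∀ x v, |φ (x + v) - φ x - fderiv ℝ φ x v| ≤ M * ‖v‖ ^ 2 := by
  have c1 : ContDiff ℝ 1 (fderiv ℝ φ) := hφ.fderiv_right (by norm_num)
  have b2 : ∀ x, ‖fderiv ℝ (fderiv ℝ φ) x‖ ≤ M := fun x => by
    have := hφb 2 (by norm_num) x
    rwa [← norm_iteratedFDeriv_fderiv, ← norm_iteratedFDeriv_fderiv,
      norm_iteratedFDeriv_zero] at this
  have b1 : ∀ x, ‖fderiv ℝ φ x‖ ≤ M := fun x => by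
    have := hφb 1 (by norm_num) x
    rwa [← norm_iteratedFDeriv_fderiv, norm_iteratedFDeriv_zero] at this
  refine ⟨fun x => by simpa using hφb 0 (by norm_num) x, b1, c1.continuous, ?_⟩
  intro x v
  exact fpf_t1 φ (hφ.differentiable (by norm_num)) (c1.differentiable (by norm_num)) M b2 x v

lemma fpf_iadd {Ω : Type*} [MeasurableSpace Ω] {P : Measure Ω} {f g : Ω → ℝ}
    (hf : Integrable f P) (hg : Integrable g P) : Integrable (fun ω => f ω + g ω) P := hf.add hg

lemma fpf_isub {Ω : Type*} [MeasurableSpace Ω] {P : Measure Ω} {f g : Ω → ℝ}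
    (hf : Integrable f P) (hg : Integrable g P) : Integrable (fun ω => f ω - g ω) P := hf.sub hg

lemma fpf_bdd_mul_int {Ω : Type*} [MeasurableSpace Ω] {P : Measure Ω} {a f : Ω → ℝ}
    (ha : Measurable a) {L : ℝ} (hL : ∀ ω, |a ω| ≤ L) (hf : Integrable f P) :
    Integrable (fun ω => a ω * f ω) P :=
  hf.bdd_mul ha.aestronglyMeasurable (Filter.Eventually.of_forall hL)

lemma fpf_bdd_int {Ω : Type*} [MeasurableSpace Ω] {P : Measure Ω} [IsProbabilityMeasure P]
    {a : Ω → ℝ} (ha : Measurable a) {L : ℝ} (hL : ∀ ω, |a ω| ≤ L) : Integrable a P :=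
  Integrable.of_bound ha.aestronglyMeasurable L (Filter.Eventually.of_forall hL)

lemma fpf_bdd_abs {Ω : Type*} [MeasurableSpace Ω] {P : Measure Ω} [IsProbabilityMeasure P]
    {a : Ω → ℝ} {L : ℝ} (hL : ∀ ω, |a ω| ≤ L) : |∫ ω, a ω ∂P| ≤ L := by
  have := norm_integral_le_of_norm_le_const (μ := P) (f := a) (C := L)
    (Filter.Eventually.of_forall hL)
  simpa using this

lemma fpf_moments {Ω : Type*} [MeasurableSpace Ω] (P : Measure Ω) [IsProbabilityMeasure P]
    (H W : Ω → ℝ) (hH : Measurable H) (hW : Measurable W) (M : ℝ) (hM : ∀ ω, |H ω| ≤ M)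
    (t : ℝ) (ht : 0 < t) (ht1 : t ≤ 1) (hlaw : P.map W = gaussianReal 0 t.toNNReal)
    (hind : IndepFun H W P) :
    (∀ k : ℕ, k ≤ 4 → Integrable (fun ω => (H ω * t + W ω) ^ k) P) ∧
    (∫ ω, (H ω * t + W ω) ∂P = t * ∫ ω, H ω ∂P) ∧
    (|∫ ω, (H ω * t + W ω) ^ 2 ∂P - t| ≤ M ^ 2 * t ^ 2) ∧
    (|∫ ω, (H ω * t + W ω) ^ 3 ∂P| ≤ (M ^ 3 + 3 * M) * t ^ 2) ∧
    (∫ ω, (H ω * t + W ω) ^ 4 ∂P ≤ 8 * (M ^ 4 + ∫ x, x ^ 4 ∂(gaussianReal 0 1)) * t ^ 2) := by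
  have hΩ : Nonempty Ω := P.nonempty_of_neZero
  have hM0 : 0 ≤ M := (abs_nonneg _).trans (hM hΩ.some)
  have hWk : ∀ k : ℕ, Integrable (fun ω => W ω ^ k) P := fun k => by
    have := fpf_gauss_int t.toNNReal k
    rw [← hlaw] at this
    exact this.comp_measurable hW
  have hWi : ∀ k : ℕ, ∫ ω, W ω ^ k ∂P = ∫ x, x ^ k ∂(gaussianReal 0 t.toNNReal) := fun k => by
    rw [← hlaw, integral_map hW.aemeasurable (by fun_prop)]
  have w1 : ∫ ω, W ω ∂P = 0 := by
    have := hWi 1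
    simp only [pow_one] at this
    rw [this, fpf_gauss1]
  have w2 : ∫ ω, W ω ^ 2 ∂P = t := by
    rw [hWi, fpf_gauss2, Real.coe_toNNReal _ ht.le]
  have w3 : ∫ ω, W ω ^ 3 ∂P = 0 := by rw [hWi, fpf_gauss3]
  have w4 : ∫ ω, W ω ^ 4 ∂P = t ^ 2 * ∫ x, x ^ 4 ∂(gaussianReal 0 1) := by
    rw [hWi, fpf_gauss4 t ht]
  have hHk : ∀ j : ℕ, ∀ ω, |H ω ^ j| ≤ M ^ j := fun j ω => by
    rw [abs_pow]; exact pow_le_pow_left₀ (abs_nonneg _) (hM ω) j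
  have hint : ∀ j k : ℕ, Integrable (fun ω => H ω ^ j * W ω ^ k) P := fun j k =>
    fpf_bdd_mul_int (by fun_prop) (hHk j) (hWk k)
  have hprod : ∀ j k : ℕ, ∫ ω, H ω ^ j * W ω ^ k ∂P = (∫ ω, H ω ^ j ∂P) * ∫ ω, W ω ^ k ∂P :=
    fun j k => by
      have : IndepFun (fun ω => H ω ^ j) (fun ω => W ω ^ k) P :=
        hind.comp (φ := fun x => x ^ j) (ψ := fun x => x ^ k) (by fun_prop) (by fun_prop)
      exact this.integral_fun_mul_eq_mul_integral (by fun_prop) (by fun_prop)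
  have hHb : ∀ j : ℕ, |∫ ω, H ω ^ j ∂P| ≤ M ^ j := fun j => fpf_bdd_abs (hHk j)
  have hHint : ∀ j : ℕ, Integrable (fun ω => H ω ^ j) P := fun j =>
    fpf_bdd_int (by fun_prop) (hHk j)
  have hH1 : Integrable H P := by simpa using hHint 1
  have hW1 : Integrable W P := by simpa using hWk 1
  have e2 : ∀ ω, (H ω * t + W ω) ^ 2
      = t ^ 2 * H ω ^ 2 + (2 * t) * (H ω ^ 1 * W ω ^ 1) + W ω ^ 2 := fun ω => by ring
  have e3 : ∀ ω, (H ω * t + W ω) ^ 3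
      = t ^ 3 * H ω ^ 3 + (3 * t ^ 2) * (H ω ^ 2 * W ω ^ 1) + (3 * t) * (H ω ^ 1 * W ω ^ 2)
        + W ω ^ 3 := fun ω => by ring
  have e4 : ∀ ω, (H ω * t + W ω) ^ 4
      = t ^ 4 * H ω ^ 4 + (4 * t ^ 3) * (H ω ^ 3 * W ω ^ 1) + (6 * t ^ 2) * (H ω ^ 2 * W ω ^ 2)
        + (4 * t) * (H ω ^ 1 * W ω ^ 3) + W ω ^ 4 := fun ω => by ring
  have i2a : Integrable (fun ω => t ^ 2 * H ω ^ 2 + (2 * t) * (H ω ^ 1 * W ω ^ 1)) P :=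
    ((hHint 2).const_mul _).add ((hint 1 1).const_mul _)
  have i3a : Integrable (fun ω => t ^ 3 * H ω ^ 3 + (3 * t ^ 2) * (H ω ^ 2 * W ω ^ 1)) P :=
    ((hHint 3).const_mul _).add ((hint 2 1).const_mul _)
  have i3b : Integrable (fun ω => t ^ 3 * H ω ^ 3 + (3 * t ^ 2) * (H ω ^ 2 * W ω ^ 1)
      + (3 * t) * (H ω ^ 1 * W ω ^ 2)) P := i3a.add ((hint 1 2).const_mul _)
  have i4 : Integrable (fun ω => (H ω * t + W ω) ^ 4) P := by
    simp_rw [e4]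
    exact (((((hHint 4).const_mul _).add ((hint 3 1).const_mul _)).add
      ((hint 2 2).const_mul _)).add ((hint 1 3).const_mul _)).add (hWk 4)
  refine ⟨?_, ?_, ?_, ?_, ?_⟩
  · intro k hk
    interval_cases k
    · simp
    · simpa using fpf_iadd (hH1.mul_const t) hW1
    · simp_rw [e2]; exact i2a.add (hWk 2)
    · simp_rw [e3]; exact i3b.add (hWk 3)
    · exact i4
  · rw [integral_add (hH1.mul_const t) hW1, integral_mul_const, w1]; ring
  · simp_rw [e2]
    rw [integral_add i2a (hWk 2), integral_add ((hHint 2).const_mul _) ((hint 1 1).const_mul _),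
      integral_const_mul, integral_const_mul, hprod, w2]
    simp only [pow_one, w1]
    have := hHb 2
    rw [show t ^ 2 * ∫ ω, H ω ^ 2 ∂P = (∫ ω, H ω ^ 2 ∂P) * t ^ 2 by ring]
    ring_nf
    rw [abs_mul, abs_of_nonneg (sq_nonneg t)]
    have := mul_le_mul_of_nonneg_right this (sq_nonneg t)
    linarith
  · simp_rw [e3]
    rw [integral_add i3b (hWk 3), integral_add i3a ((hint 1 2).const_mul _),
      integral_add ((hHint 3).const_mul _) ((hint 2 1).const_mul _),
      integral_const_mul, integral_const_mul, integral_const_mul, hprod, hprod, w2, w3]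
    simp only [pow_one, w1]
    have h3 := hHb 3
    have h1 := hHb 1
    simp only [pow_one] at h1
    have e : t ^ 3 * ∫ ω, H ω ^ 3 ∂P + 3 * t ^ 2 * ((∫ ω, H ω ^ 2 ∂P) * 0)
      + 3 * t * ((∫ ω, H ω ∂P) * t) + 0
      = (t * (∫ ω, H ω ^ 3 ∂P) + 3 * (∫ ω, H ω ∂P)) * t ^ 2 := by ring
    rw [e, abs_mul, abs_of_nonneg (sq_nonneg t)]
    refine mul_le_mul_of_nonneg_right ?_ (sq_nonneg t)
    refine (abs_add_le _ _).trans ?_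
    rw [abs_mul, abs_mul, abs_of_pos ht, abs_of_pos (by norm_num : (0 : ℝ) < 3)]
    have : t * |∫ ω, H ω ^ 3 ∂P| ≤ 1 * M ^ 3 := by gcongr
    linarith
  · have hle : ∫ ω, (H ω * t + W ω) ^ 4 ∂P ≤ ∫ ω, (8 * (M ^ 4 * t ^ 2) + 8 * W ω ^ 4) ∂P := by
      refine integral_mono i4 ((integrable_const _).add ((hWk 4).const_mul _)) ?_
      intro ω
      have h1 : (H ω * t + W ω) ^ 4 ≤ 8 * ((H ω * t) ^ 4 + W ω ^ 4) := by
        nlinarith [sq_nonneg (H ω * t - W ω), sq_nonneg (H ω * t + W ω),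
          sq_nonneg ((H ω * t) ^ 2 - W ω ^ 2), mul_nonneg (sq_nonneg (H ω * t - W ω)) (sq_nonneg (H ω * t + W ω)), sq_nonneg ((H ω * t - W ω) ^ 2)]
      have h2 : H ω ^ 4 ≤ M ^ 4 := (le_abs_self _).trans (hHk 4 ω)
      have h3 : t ^ 4 ≤ t ^ 2 := pow_le_pow_of_le_one ht.le ht1 (by norm_num)
      have h4 : (H ω * t) ^ 4 ≤ M ^ 4 * t ^ 2 := by
        rw [mul_pow]; gcongr
      show _ ≤ _
      simp only
      linarith
    rw [integral_add (integrable_const _) ((hWk 4).const_mul _), integral_const_mul 8 (fun ω => W ω ^ 4),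
      w4, integral_const, probReal_univ, one_smul] at hle
    linarith

lemma fpf_prob {n : ℕ} {Ω : Type*} [MeasurableSpace Ω]
    (P : Measure Ω) [IsProbabilityMeasure P]
    (X : Ω → Fin n → ℝ) (hXm : Measurable X)
    (h : (Fin n → ℝ) → ℝ) (hhm : Measurable h)
    (Mh : ℝ) (hhb : ∀ x, |h x| ≤ Mh)
    (W : Ω → ℝ) (hWm : Measurable W) (t : ℝ) (ht : 0 < t) (ht1 : t ≤ 1)
    (hlaw : P.map W = gaussianReal 0 (Real.toNNReal t))
    (hind : IndepFun X W P)
    (Xb : Ω → Fin n → ℝ) (hXbm : Measurable Xb) (hXblaw : P.map Xb = P.map X)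
    (hXbind : IndepFun Xb (fun ω => (X ω, W ω)) P)
    (a2 p a3 a1 q : (Fin n → ℝ) → ℝ)
    (m2 : Measurable a2) (mp : Measurable p) (m3 : Measurable a3) (m1 : Measurable a1)
    (mq : Measurable q) (L : ℝ) (b2 : ∀ x, |a2 x| ≤ L) (bp : ∀ x, |p x| ≤ L)
    (b3 : ∀ x, |a3 x| ≤ L) (b1 : ∀ x, |a1 x| ≤ L) (bq : ∀ x, |q x| ≤ L)
    (G : (Fin n → ℝ) → ℝ → ℝ) (C : ℝ) (hC : 0 ≤ C)
    (hGm : Measurable (fun z : (Fin n → ℝ) × ℝ => G z.1 z.2))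
    (hG : ∀ x y, |G x y - (a2 x * y ^ 2 - p x * y - a3 x * y ^ 3 + t * (a1 x * y) - q x * t)|
      ≤ C * (y ^ 4 + t * y ^ 2 + t ^ 2)) :
    |(∫ ω, (p (X ω) * (h (X ω) * t + W ω) + q (X ω) * t) ∂P)
      + (∫ ω, G (Xb ω) (h (X ω) * t + W ω) ∂P)
      - (∫ ω, (a2 (X ω) + p (X ω) * (h (X ω) - ∫ ω, h (X ω) ∂P)) ∂P) * t|
    ≤ (L * Mh ^ 2 + L * (Mh ^ 3 + 3 * Mh) + L * Mh
      + C * (8 * (Mh ^ 4 + ∫ x, x ^ 4 ∂(gaussianReal 0 1)) + (Mh ^ 2 + 1) + 1)) * t ^ 2 := by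
  have hΩ : Nonempty Ω := P.nonempty_of_neZero
  have hM0 : 0 ≤ Mh := (abs_nonneg _).trans (hhb (X hΩ.some))
  have hL0 : 0 ≤ L := (abs_nonneg _).trans (b2 (X hΩ.some))
  obtain ⟨iY, y1, y2, y3, y4⟩ := fpf_moments P (fun ω => h (X ω)) W (hhm.comp hXm) hWm Mh
    (fun ω => hhb _) t ht ht1 hlaw (hind.comp hhm measurable_id)
  obtain ⟨Y, hY⟩ : ∃ Y : Ω → ℝ, Y = fun ω => h (X ω) * t + W ω := ⟨_, rfl⟩
  have hYa : ∀ ω, h (X ω) * t + W ω = Y ω := fun ω => by rw [hY]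
  have hYm : Measurable Y := by rw [hY]; fun_prop
  have hYind : IndepFun Xb Y P := by
    rw [hY]
    exact hXbind.comp (φ := id) (ψ := fun z : (Fin n → ℝ) × ℝ => h z.1 * t + z.2)
      measurable_id (by fun_prop)
  have hW1 : Integrable W P := by
    have := fpf_gauss_int t.toNNReal 1
    rw [← hlaw] at this
    have := this.comp_measurable hWm
    simp only [pow_one] at this
    exact this
  have w1 : ∫ ω, W ω ∂P = 0 := by
    have : ∫ ω, W ω ∂P = ∫ x, x ∂(P.map W) := by
      rw [integral_map hWm.aemeasurable (by fun_prop)]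
    rw [this, hlaw, fpf_gauss1]
  -- first integral
  have hpW : ∫ ω, p (X ω) * W ω ∂P = 0 := by
    have : IndepFun (fun ω => p (X ω)) W P := hind.comp mp measurable_id
    rw [this.integral_fun_mul_eq_mul_integral (mp.comp hXm).aestronglyMeasurable (by fun_prop), w1, mul_zero]
  have ipW : Integrable (fun ω => p (X ω) * W ω) P :=
    fpf_bdd_mul_int (by fun_prop) (fun ω => bp (X ω)) hW1
  have ih : Integrable (fun ω => h (X ω)) P := fpf_bdd_int (by fun_prop) (fun ω => hhb (X ω))
  have ip : Integrable (fun ω => p (X ω)) P := fpf_bdd_int (by fun_prop) (fun ω => bp (X ω))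
  have iq : Integrable (fun ω => q (X ω)) P := fpf_bdd_int (by fun_prop) (fun ω => bq (X ω))
  have i2 : Integrable (fun ω => a2 (X ω)) P := fpf_bdd_int (by fun_prop) (fun ω => b2 (X ω))
  have iph : Integrable (fun ω => p (X ω) * h (X ω)) P :=
    fpf_bdd_mul_int (by fun_prop) (fun ω => bp (X ω)) ih
  have I1 : ∫ ω, (p (X ω) * (h (X ω) * t + W ω) + q (X ω) * t) ∂P
      = t * (∫ ω, p (X ω) * h (X ω) ∂P) + t * ∫ ω, q (X ω) ∂P := by
    have e : ∀ ω, p (X ω) * (h (X ω) * t + W ω) + q (X ω) * t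
        = (t * (p (X ω) * h (X ω)) + p (X ω) * W ω) + t * q (X ω) := fun ω => by ring
    simp_rw [e]
    rw [integral_add (fpf_iadd (iph.const_mul t) ipW) (iq.const_mul t),
      integral_add (iph.const_mul t) ipW, hpW, integral_const_mul, integral_const_mul]
    ring
  have I3 : ∫ ω, (a2 (X ω) + p (X ω) * (h (X ω) - ∫ ω, h (X ω) ∂P)) ∂P
      = (∫ ω, a2 (X ω) ∂P) + (∫ ω, p (X ω) * h (X ω) ∂P)
        - (∫ ω, p (X ω) ∂P) * ∫ ω, h (X ω) ∂P := by
    generalize (∫ ω, h (X ω) ∂P) = c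
    have e : ∀ ω, a2 (X ω) + p (X ω) * (h (X ω) - c)
        = (a2 (X ω) + p (X ω) * h (X ω)) - p (X ω) * c := fun ω => by ring
    simp_rw [e]
    rw [integral_sub (fpf_iadd i2 iph) (ip.mul_const c), integral_add i2 iph, integral_mul_const]
  simp_rw [hYa] at iY y1 y2 y3 y4 ⊢
  -- product expectations
  have hXb : ∀ a : (Fin n → ℝ) → ℝ, Measurable a → ∫ ω, a (Xb ω) ∂P = ∫ ω, a (X ω) ∂P := by
    intro a ha
    rw [← integral_map hXbm.aemeasurable ha.aestronglyMeasurable, hXblaw,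
      integral_map hXm.aemeasurable ha.aestronglyMeasurable]
  have hprod : ∀ a : (Fin n → ℝ) → ℝ, Measurable a → ∀ k : ℕ,
      ∫ ω, a (Xb ω) * Y ω ^ k ∂P = (∫ ω, a (X ω) ∂P) * ∫ ω, Y ω ^ k ∂P := by
    intro a ha k
    have : IndepFun (fun ω => a (Xb ω)) (fun ω => Y ω ^ k) P :=
      hYind.comp (φ := a) (ψ := fun y => y ^ k) ha (by fun_prop)
    rw [this.integral_fun_mul_eq_mul_integral (ha.comp hXbm).aestronglyMeasurable (by fun_prop), hXb a ha]
  have ipr : ∀ a : (Fin n → ℝ) → ℝ, Measurable a → (∀ x, |a x| ≤ L) → ∀ k : ℕ, k ≤ 4 →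
      Integrable (fun ω => a (Xb ω) * Y ω ^ k) P := fun a ha hb k hk =>
    fpf_bdd_mul_int (by fun_prop) (fun ω => hb (Xb ω)) (iY k hk)
  have j2 := ipr a2 m2 b2 2 (by norm_num)
  have j3 := ipr a3 m3 b3 3 (by norm_num)
  have jp := ipr p mp bp 1 (by norm_num)
  have j1 := (ipr a1 m1 b1 1 (by norm_num)).const_mul t
  have jq := (ipr q mq bq 0 (by norm_num)).mul_const t
  have p2 := hprod a2 m2 2
  have p3 := hprod a3 m3 3
  have pp := hprod p mp 1
  have p1 := hprod a1 m1 1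
  have pq := hprod q mq 0
  simp only [pow_one, pow_zero, mul_one, integral_const, probReal_univ, smul_eq_mul] at jp j1 jq pp p1 pq
  have k1 := fpf_isub j2 jp
  have k2 := fpf_isub k1 j3
  have k3 := fpf_iadd k2 j1
  have k4 := fpf_isub k3 jq
  have Imain : ∫ ω, (a2 (Xb ω) * Y ω ^ 2 - p (Xb ω) * Y ω - a3 (Xb ω) * Y ω ^ 3
      + t * (a1 (Xb ω) * Y ω) - q (Xb ω) * t) ∂P
      = (∫ ω, a2 (X ω) ∂P) * (∫ ω, Y ω ^ 2 ∂P) - (∫ ω, p (X ω) ∂P) * (∫ ω, Y ω ∂P)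
       - (∫ ω, a3 (X ω) ∂P) * (∫ ω, Y ω ^ 3 ∂P) + t * ((∫ ω, a1 (X ω) ∂P) * (∫ ω, Y ω ∂P))
       - (∫ ω, q (X ω) ∂P) * t := by
    rw [← p2, ← p3, ← pp, ← p1, ← pq, ← integral_const_mul, ← integral_mul_const,
      ← integral_sub j2 jp, ← integral_sub k1 j3, ← integral_add k2 j1, ← integral_sub k3 jq]
  have iBd : Integrable (fun ω => C * (Y ω ^ 4 + t * Y ω ^ 2 + t ^ 2)) P :=
    (((iY 4 le_rfl).add ((iY 2 (by norm_num)).const_mul t)).add (integrable_const _)).const_mul C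
  have hGm' : Measurable (fun ω => G (Xb ω) (Y ω)) := hGm.comp (hXbm.prodMk hYm)
  have iR : Integrable (fun ω => G (Xb ω) (Y ω) - (a2 (Xb ω) * Y ω ^ 2 - p (Xb ω) * Y ω
      - a3 (Xb ω) * Y ω ^ 3 + t * (a1 (Xb ω) * Y ω) - q (Xb ω) * t)) P := by
    refine iBd.mono' (by fun_prop) (Filter.Eventually.of_forall fun ω => hG (Xb ω) (Y ω))
  have iG : Integrable (fun ω => G (Xb ω) (Y ω)) P := by
    have := iR.add k4
    refine this.congr (Filter.Eventually.of_forall fun ω => ?_)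
    simp
  have hR : |∫ ω, (G (Xb ω) (Y ω) - (a2 (Xb ω) * Y ω ^ 2 - p (Xb ω) * Y ω
      - a3 (Xb ω) * Y ω ^ 3 + t * (a1 (Xb ω) * Y ω) - q (Xb ω) * t)) ∂P|
      ≤ C * ((∫ ω, Y ω ^ 4 ∂P) + t * (∫ ω, Y ω ^ 2 ∂P) + t ^ 2) := by
    have := norm_integral_le_of_norm_le (f := fun ω => G (Xb ω) (Y ω) - (a2 (Xb ω) * Y ω ^ 2
      - p (Xb ω) * Y ω - a3 (Xb ω) * Y ω ^ 3 + t * (a1 (Xb ω) * Y ω) - q (Xb ω) * t)) iBd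
      (Filter.Eventually.of_forall fun ω => hG (Xb ω) (Y ω))
    refine this.trans (le_of_eq ?_)
    rw [integral_const_mul, integral_add (fpf_iadd (iY 4 le_rfl) ((iY 2 (by norm_num)).const_mul t))
      (integrable_const _), integral_add (iY 4 le_rfl) ((iY 2 (by norm_num)).const_mul t),
      integral_const_mul]
    simp
  rw [integral_sub iG k4, Imain] at hR
  have c2 : |∫ ω, a2 (X ω) ∂P| ≤ L := fpf_bdd_abs fun ω => b2 _
  have c3 : |∫ ω, a3 (X ω) ∂P| ≤ L := fpf_bdd_abs fun ω => b3 _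
  have c1 : |∫ ω, a1 (X ω) ∂P| ≤ L := fpf_bdd_abs fun ω => b1 _
  have ch : |∫ ω, h (X ω) ∂P| ≤ Mh := fpf_bdd_abs fun ω => hhb _
  rw [y1] at hR
  simp_rw [hYa] at I1
  rw [I1, I3]
  generalize (∫ ω, a2 (X ω) ∂P) = A2 at *
  generalize (∫ ω, a3 (X ω) ∂P) = A3 at *
  generalize (∫ ω, a1 (X ω) ∂P) = A1 at *
  generalize (∫ ω, h (X ω) ∂P) = Hh at *
  generalize (∫ ω, p (X ω) ∂P) = Pp at *
  generalize (∫ ω, q (X ω) ∂P) = Q at *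
  generalize (∫ ω, p (X ω) * h (X ω) ∂P) = PH at *
  generalize (∫ ω, G (Xb ω) (Y ω) ∂P) = GG at *
  generalize (∫ ω, Y ω ^ 2 ∂P) = Y2 at *
  generalize (∫ ω, Y ω ^ 3 ∂P) = Y3 at *
  generalize (∫ ω, Y ω ^ 4 ∂P) = Y4 at *
  generalize (∫ x, x ^ 4 ∂(gaussianReal 0 1)) = m4 at *
  have q2 : |A2 * (Y2 - t)| ≤ L * (Mh ^ 2 * t ^ 2) := by rw [abs_mul]; gcongr
  have q3 : |A3 * Y3| ≤ L * ((Mh ^ 3 + 3 * Mh) * t ^ 2) := by rw [abs_mul]; gcongr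
  have q1 : |A1 * Hh * t ^ 2| ≤ L * Mh * t ^ 2 := by
    rw [abs_mul, abs_mul, abs_of_nonneg (sq_nonneg t)]; gcongr
  have qy : t * Y2 ≤ (Mh ^ 2 + 1) * t ^ 2 := by
    have h1 : Y2 ≤ Mh ^ 2 * t ^ 2 + t := by linarith [(abs_le.1 y2).2]
    have h2 : Mh ^ 2 * t ^ 2 ≤ Mh ^ 2 * t := by
      gcongr; nlinarith
    nlinarith
  have qR := hR.trans (mul_le_mul_of_nonneg_left
    (show Y4 + t * Y2 + t ^ 2 ≤ (8 * (Mh ^ 4 + m4) + (Mh ^ 2 + 1) + 1) * t ^ 2 by linarith) hC)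
  rw [abs_le] at q1 q2 q3 qR ⊢
  constructor <;> linarith [q1.1, q1.2, q2.1, q2.2, q3.1, q3.2, qR.1, qR.2]

set_option maxHeartbeats 1000000 in
lemma fpf_scalar (M K N t y A Aw B1 B2 B3 S R1 R2 nv : ℝ) (hM : 0 ≤ M) (hK : 0 ≤ K) (hN : 0 ≤ N)
    (ht : 0 < t) (ht1 : t ≤ 1)
    (hnv0 : 0 ≤ nv) (hnv : nv ≤ K * (|y| + t)) (hAw : |Aw| ≤ M * K) (hS : |S| ≤ N)
    (hB1 : |B1| ≤ M * K * K) (hB2 : |B2| ≤ M * K * K) (hB3 : |B3| ≤ M * K * K)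
    (hR1 : |R1| ≤ M * nv ^ 3) (hR2 : |R2| ≤ M * nv ^ 2)
    (hA : A = S * t ^ 2 - R1 * y - (1 / 2 * (B1 + B2) * y ^ 2 * t + 1 / 2 * B3 * y * t ^ 2)
      - R2 * t - Aw * t ^ 2) :
    |A| ≤ (N + 8 * M * K ^ 3 + 4 * M * K ^ 2 + M * K) * (y ^ 4 + t * y ^ 2 + t ^ 2) := by
  have hy := abs_nonneg y
  have ysq : |y| ^ 2 = y ^ 2 := sq_abs y
  have yq : |y| ^ 4 = y ^ 4 := by rw [show (4 : ℕ) = 2 * 2 by rfl, pow_mul, pow_mul, sq_abs]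
  have t2 : 0 ≤ t ^ 2 := sq_nonneg t
  have t43 : t ^ 4 ≤ t ^ 2 := pow_le_pow_of_le_one ht.le ht1 (by norm_num)
  have t32 : t ^ 3 ≤ t ^ 2 := pow_le_pow_of_le_one ht.le ht1 (by norm_num)
  have tt : t ^ 2 ≤ t := by nlinarith
  have e1 : |S * t ^ 2| ≤ N * t ^ 2 := by rw [abs_mul, abs_of_nonneg t2]; gcongr
  have e5 : |Aw * t ^ 2| ≤ M * K * t ^ 2 := by rw [abs_mul, abs_of_nonneg t2]; gcongr
  have p4 : (|y| + t) ^ 4 ≤ 8 * (y ^ 4 + t ^ 2) := by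
    have : (|y| + t) ^ 4 ≤ 8 * (|y| ^ 4 + t ^ 4) := by
      nlinarith [sq_nonneg (|y| ^ 2 - t ^ 2), mul_nonneg (sq_nonneg (|y| - t)) (sq_nonneg (|y| + t)),
        sq_nonneg ((|y| - t) ^ 2)]
    linarith
  have p2 : (|y| + t) ^ 2 * t ≤ 2 * (t * y ^ 2 + t ^ 2) := by
    have : (|y| + t) ^ 2 ≤ 2 * (y ^ 2 + t ^ 2) := by
      rw [← ysq]; linarith [sq_nonneg (|y| - t)]
    calc (|y| + t) ^ 2 * t ≤ 2 * (y ^ 2 + t ^ 2) * t := by gcongr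
      _ = 2 * (t * y ^ 2 + t ^ 3) := by ring
      _ ≤ _ := by gcongr
  have e2 : |R1 * y| ≤ M * K ^ 3 * (8 * (y ^ 4 + t ^ 2)) := by
    rw [abs_mul]
    calc |R1| * |y| ≤ (M * (K * (|y| + t)) ^ 3) * (|y| + t) := by
          gcongr
          · exact hR1.trans (by gcongr)
          · linarith
      _ = M * K ^ 3 * (|y| + t) ^ 4 := by ring
      _ ≤ _ := by gcongr
  have e4 : |R2 * t| ≤ M * K ^ 2 * (2 * (t * y ^ 2 + t ^ 2)) := by
    rw [abs_mul, abs_of_pos ht]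
    calc |R2| * t ≤ (M * (K * (|y| + t)) ^ 2) * t := by
          gcongr
          exact hR2.trans (by gcongr)
      _ = M * K ^ 2 * ((|y| + t) ^ 2 * t) := by ring
      _ ≤ _ := by gcongr
  have e3 : |1 / 2 * (B1 + B2) * y ^ 2 * t| ≤ M * K ^ 2 * (t * y ^ 2) := by
    have : |1 / 2 * (B1 + B2)| ≤ M * K ^ 2 := by
      rw [abs_le] at hB1 hB2 ⊢
      have e : M * K ^ 2 = M * K * K := by ring
      rw [e]
      constructor <;> linarith [hB1.1, hB2.1, hB1.2, hB2.2]
    rw [mul_assoc, abs_mul, abs_of_nonneg (by positivity : 0 ≤ y ^ 2 * t), mul_comm t]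
    gcongr
  have e6 : |1 / 2 * B3 * y * t ^ 2| ≤ M * K ^ 2 * (t * y ^ 2 + t ^ 2) := by
    have h1 : |1 / 2 * B3| ≤ M * K ^ 2 := by
      rw [abs_mul, abs_of_pos (by norm_num : (0 : ℝ) < 1 / 2)]
      have e : M * K ^ 2 = M * K * K := by ring
      rw [e]
      linarith [abs_nonneg B3]
    have h2 : |y| * t ^ 2 ≤ t * y ^ 2 + t ^ 2 := by
      have : |y| ≤ y ^ 2 + 1 := by rw [← ysq]; nlinarith [sq_nonneg (|y| - 1)]
      calc |y| * t ^ 2 ≤ (y ^ 2 + 1) * t ^ 2 := by gcongr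
        _ = y ^ 2 * t ^ 2 + t ^ 2 := by ring
        _ ≤ y ^ 2 * t + t ^ 2 := by gcongr
        _ = _ := by ring
    rw [mul_assoc, abs_mul, abs_mul y, abs_of_nonneg t2]
    gcongr
  have f0 : 0 ≤ y ^ 4 := by positivity
  have f1 : 0 ≤ t * y ^ 2 := by positivity
  have g1 : 0 ≤ M * K ^ 3 := by positivity
  have g2 : 0 ≤ M * K ^ 2 := by positivity
  have g3 : 0 ≤ M * K := by positivity
  have hfin : N * t ^ 2 + M * K ^ 3 * (8 * (y ^ 4 + t ^ 2)) + M * K ^ 2 * (t * y ^ 2)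
      + M * K ^ 2 * (t * y ^ 2 + t ^ 2) + M * K ^ 2 * (2 * (t * y ^ 2 + t ^ 2)) + M * K * t ^ 2
      ≤ (N + 8 * M * K ^ 3 + 4 * M * K ^ 2 + M * K) * (y ^ 4 + t * y ^ 2 + t ^ 2) := by
    have z1 := mul_nonneg hN f0
    have z2 := mul_nonneg hN f1
    have z3 := mul_nonneg g1 f1
    have z4 := mul_nonneg g2 f0
    have z5 := mul_nonneg g3 f0
    have z6 := mul_nonneg g3 f1
    have z7 := mul_nonneg g2 t2
    linarith
  refine le_trans ?_ hfin
  rw [hA]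
  rw [abs_le] at e1 e2 e3 e4 e5 e6 ⊢
  constructor <;> linarith [e1.1, e2.1, e3.1, e4.1, e5.1, e6.1, e1.2, e2.2, e3.2, e4.2, e5.2, e6.2]

lemma fpf_lin {n : ℕ} (L : (Fin n → ℝ) →L[ℝ] ℝ) (v : Fin n → ℝ) :
    L v = ∑ i, v i * L (Pi.single i 1) := by
  conv_lhs => rw [pi_eq_sum_univ' v, map_sum]
  refine Finset.sum_congr rfl fun i _ => ?_
  rw [map_smul, smul_eq_mul]

lemma fpf_sum_bd {n : ℕ} (a b : Fin n → ℝ) (K : ℝ) (hK : 0 ≤ K) (ha : ∀ i, |a i| ≤ K)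
    (hb : ∀ i, |b i| ≤ K) : |∑ i, a i * b i| ≤ n * K ^ 2 := by
  refine (Finset.abs_sum_le_sum_abs _ _).trans ?_
  refine (Finset.sum_le_card_nsmul _ _ (K ^ 2) ?_).trans (by simp)
  intro i _
  rw [abs_mul, sq]
  exact mul_le_mul (ha i) (hb i) (abs_nonneg _) hK

lemma fpf_op1 {n : ℕ} (L : (Fin n → ℝ) →L[ℝ] ℝ) (M K : ℝ) (hM : 0 ≤ M) (hL : ‖L‖ ≤ M)
    (v : Fin n → ℝ) (hv : ‖v‖ ≤ K) : |L v| ≤ M * K :=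
  (L.le_opNorm v).trans (mul_le_mul hL hv (norm_nonneg _) hM)

lemma fpf_op2 {n : ℕ} (L : (Fin n → ℝ) →L[ℝ] (Fin n → ℝ) →L[ℝ] ℝ) (M K : ℝ) (hM : 0 ≤ M)
    (hK : 0 ≤ K) (hL : ‖L‖ ≤ M)
    (v w : Fin n → ℝ) (hv : ‖v‖ ≤ K) (hw : ‖w‖ ≤ K) : |L v w| ≤ M * K * K :=
  fpf_op1 (L v) (M * K) K (mul_nonneg hM hK)
    ((L.le_opNorm v).trans (mul_le_mul hL hv (norm_nonneg _) hM)) w hw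

/-- **Leading-order expansion of the OT max-min objective for the FPF.**
For the time-discretized observation model `ΔY = h(X)Δt + ΔW` with `ΔW ~ N(0, Δt)`
independent of `X`, the independent copy `X̄` of `X`, the test function
`f(x, y) = φ(x) y + ψ(x) Δt` and the map `T(x, y) = x + κ(x) y + u(x) Δt`, the
max-min objective satisfies `|J(f, T) − J₁(φ, κ) Δt| ≤ C Δt²` for all sufficiently
small `Δt > 0`, where
`J₁(φ, κ) = E[½|κ(X) − ∇φ(X)|² − ½|∇φ(X)|² + φ(X)(h(X) − ĥ)]`. -/
theorem fpf_objective_expansion {n : ℕ} {Ω : Type*} [MeasurableSpace Ω]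
    (P : Measure Ω) [IsProbabilityMeasure P]
    (X : Ω → Fin n → ℝ) (hXm : Measurable X)
    (h : (Fin n → ℝ) → ℝ) (hhm : Measurable h)
    (Mh : ℝ) (hhb : ∀ x, |h x| ≤ Mh)
    (hhat : ℝ) (hhat_def : hhat = ∫ ω, h (X ω) ∂P)
    (ΔW : ℝ → Ω → ℝ) (hΔWm : ∀ t, Measurable (ΔW t))
    (hΔWlaw : ∀ t, 0 < t → P.map (ΔW t) = gaussianReal 0 (Real.toNNReal t))
    (hΔWind : ∀ t, IndepFun X (ΔW t) P)
    (Xb : Ω → Fin n → ℝ) (hXbm : Measurable Xb) (hXblaw : P.map Xb = P.map X)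
    (hXbind : ∀ t, IndepFun Xb (fun ω => (X ω, ΔW t ω)) P)
    (φ : (Fin n → ℝ) → ℝ) (hφ : ContDiff ℝ 3 φ)
    (Mφ : ℝ) (hφb : ∀ k : ℕ, k ≤ 3 → ∀ x, ‖iteratedFDeriv ℝ k φ x‖ ≤ Mφ)
    (ψ : (Fin n → ℝ) → ℝ) (hψ : ContDiff ℝ 2 ψ)
    (Mψ : ℝ) (hψb : ∀ k : ℕ, k ≤ 2 → ∀ x, ‖iteratedFDeriv ℝ k ψ x‖ ≤ Mψ)
    (κ u : (Fin n → ℝ) → (Fin n → ℝ))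
    (hκm : Measurable κ) (hum : Measurable u)
    (Mκ Mu : ℝ) (hκb : ∀ x i, |κ x i| ≤ Mκ) (hub : ∀ x i, |u x i| ≤ Mu)
    -- the gradient of a scalar function on `ℝ^n`
    (grad : ((Fin n → ℝ) → ℝ) → (Fin n → ℝ) → (Fin n → ℝ))
    (hgrad : ∀ g x i, grad g x i = fderiv ℝ g x (Pi.single i 1))
    (J1 : ℝ)
    (hJ1 : J1 = ∫ ω, ((1 / 2) * ∑ i, (κ (X ω) i - grad φ (X ω) i) ^ 2
        - (1 / 2) * ∑ i, (grad φ (X ω) i) ^ 2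
        + φ (X ω) * (h (X ω) - hhat)) ∂P)
    (J : ℝ → ℝ)
    -- `J Δt = E[f(X, ΔY)] + E[½|T(X̄, ΔY) − X̄|² − f(T(X̄, ΔY), ΔY)]`
    -- where `ΔY = h(X)Δt + ΔW` and `(X̄, ΔY)` is the independent coupling
    (hJ : ∀ t, J t =
      (∫ ω, (φ (X ω) * (h (X ω) * t + ΔW t ω) + ψ (X ω) * t) ∂P)
      + ∫ ω, ((1 / 2) * ∑ i, (κ (Xb ω) i * (h (X ω) * t + ΔW t ω) + u (Xb ω) i * t) ^ 2
          - (φ (Xb ω + (h (X ω) * t + ΔW t ω) • κ (Xb ω) + t • u (Xb ω))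
                * (h (X ω) * t + ΔW t ω)
            + ψ (Xb ω + (h (X ω) * t + ΔW t ω) • κ (Xb ω) + t • u (Xb ω)) * t)) ∂P) :
    ∃ C > (0 : ℝ), ∃ δ > (0 : ℝ), ∀ t : ℝ, 0 < t → t ≤ δ →
      |J t - J1 * t| ≤ C * t ^ 2 := by
  classical
  obtain ⟨M, hM0, hMφ, hMψ⟩ : ∃ M : ℝ, 0 ≤ M ∧ Mφ ≤ M ∧ Mψ ≤ M :=
    ⟨max 0 (max Mφ Mψ), by simp, by simp, by simp⟩
  obtain ⟨K, hK0, hKκ, hKu⟩ : ∃ K : ℝ, 0 ≤ K ∧ Mκ ≤ K ∧ Mu ≤ K :=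
    ⟨max 0 (max Mκ Mu), by simp, by simp, by simp⟩
  obtain ⟨φ0, φ1, φ2, cφ1, cφ2, φT⟩ := fpf_expand φ hφ M (fun k hk x => (hφb k hk x).trans hMφ)
  obtain ⟨ψ0, ψ1, cψ1, ψT⟩ := fpf_expand1 ψ hψ M (fun k hk x => (hψb k hk x).trans hMψ)
  have κi : ∀ x i, |κ x i| ≤ K := fun x i => (hκb x i).trans hKκ
  have ui : ∀ x i, |u x i| ≤ K := fun x i => (hub x i).trans hKu
  have κn : ∀ x, ‖κ x‖ ≤ K := fun x => (pi_norm_le_iff_of_nonneg hK0).2 (κi x)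
  have un : ∀ x, ‖u x‖ ≤ K := fun x => (pi_norm_le_iff_of_nonneg hK0).2 (ui x)
  have hφm : Measurable φ := hφ.continuous.measurable
  have hψm : Measurable ψ := hψ.continuous.measurable
  have evm : Continuous fun z : ((Fin n → ℝ) →L[ℝ] ℝ) × (Fin n → ℝ) => z.1 z.2 := by fun_prop
  have evm2 : Continuous fun z : ((Fin n → ℝ) →L[ℝ] (Fin n → ℝ) →L[ℝ] ℝ) × (Fin n → ℝ) =>
    z.1 z.2 z.2 := by fun_prop
  have mφκ : Measurable fun x => fderiv ℝ φ x (κ x) :=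
    evm.measurable.comp (cφ1.measurable.prodMk hκm)
  have mφu : Measurable fun x => fderiv ℝ φ x (u x) :=
    evm.measurable.comp (cφ1.measurable.prodMk hum)
  have mψκ : Measurable fun x => fderiv ℝ ψ x (κ x) :=
    evm.measurable.comp (cψ1.measurable.prodMk hκm)
  have mφκκ : Measurable fun x => fderiv ℝ (fderiv ℝ φ) x (κ x) (κ x) :=
    evm2.measurable.comp (cφ2.measurable.prodMk hκm)
  have κim : ∀ i, Measurable fun x => κ x i := fun i => (measurable_pi_apply i).comp hκm
  have uim : ∀ i, Measurable fun x => u x i := fun i => (measurable_pi_apply i).comp hum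
  have mS2 : Measurable fun x => ∑ i, κ x i * κ x i :=
    Finset.measurable_sum _ fun i _ => (κim i).mul (κim i)
  have mS11 : Measurable fun x => ∑ i, κ x i * u x i :=
    Finset.measurable_sum _ fun i _ => (κim i).mul (uim i)
  have bS2 : ∀ x, |∑ i, κ x i * κ x i| ≤ n * K ^ 2 := fun x => fpf_sum_bd _ _ K hK0 (κi x) (κi x)
  have bS11 : ∀ x, |∑ i, κ x i * u x i| ≤ n * K ^ 2 := fun x => fpf_sum_bd _ _ K hK0 (κi x) (ui x)
  have bS02 : ∀ x, |∑ i, u x i * u x i| ≤ n * K ^ 2 := fun x => fpf_sum_bd _ _ K hK0 (ui x) (ui x)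
  have bφκ : ∀ x, |fderiv ℝ φ x (κ x)| ≤ M * K := fun x => fpf_op1 _ M K hM0 (φ1 x) _ (κn x)
  have bφu : ∀ x, |fderiv ℝ φ x (u x)| ≤ M * K := fun x => fpf_op1 _ M K hM0 (φ1 x) _ (un x)
  have bψκ : ∀ x, |fderiv ℝ ψ x (κ x)| ≤ M * K := fun x => fpf_op1 _ M K hM0 (ψ1 x) _ (κn x)
  have bψu : ∀ x, |fderiv ℝ ψ x (u x)| ≤ M * K := fun x => fpf_op1 _ M K hM0 (ψ1 x) _ (un x)
  have bB : ∀ x v w, ‖v‖ ≤ K → ‖w‖ ≤ K → |fderiv ℝ (fderiv ℝ φ) x v w| ≤ M * K * K :=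
    fun x v w hv hw => fpf_op2 _ M K hM0 hK0 (φ2 x) v w hv hw
  have N0 : 0 ≤ (n : ℝ) * K ^ 2 := by positivity
  have MK0 : 0 ≤ M * K := by positivity
  have MKK0 : 0 ≤ M * K * K := by positivity
  obtain ⟨L, hL⟩ : ∃ L : ℝ, L = n * K ^ 2 + 2 * (M * K) + M * K * K + M := ⟨_, rfl⟩
  obtain ⟨C, hC⟩ : ∃ C : ℝ, C = n * K ^ 2 + 8 * M * K ^ 3 + 4 * M * K ^ 2 + M * K := ⟨_, rfl⟩
  have hC0 : 0 ≤ C := by rw [hC]; positivity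
  have hJ1' : J1 = ∫ ω, ((1 / 2 * (∑ i, κ (X ω) i * κ (X ω) i) - fderiv ℝ φ (X ω) (κ (X ω)))
      + φ (X ω) * (h (X ω) - ∫ ω, h (X ω) ∂P)) ∂P := by
    rw [hJ1, ← hhat_def]
    congr 1
    ext ω
    congr 1
    rw [fpf_lin (fderiv ℝ φ (X ω)) (κ (X ω))]
    simp_rw [← hgrad]
    rw [← mul_sub, ← Finset.sum_sub_distrib, Finset.mul_sum, Finset.mul_sum,
      ← Finset.sum_sub_distrib]
    refine Finset.sum_congr rfl fun i _ => ?_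
    ring
  have key : ∀ t : ℝ, 0 < t → t ≤ 1 → |J t - J1 * t| ≤
      (L * Mh ^ 2 + L * (Mh ^ 3 + 3 * Mh) + L * Mh
      + C * (8 * (Mh ^ 4 + ∫ x, x ^ 4 ∂(gaussianReal 0 1)) + (Mh ^ 2 + 1) + 1)) * t ^ 2 := by
    intro t ht ht1
    rw [hJ, hJ1']
    refine fpf_prob P X hXm h hhm Mh hhb (ΔW t) (hΔWm t) t ht ht1 (hΔWlaw t ht) (hΔWind t) Xb hXbm
      hXblaw (hXbind t)
      (fun x => 1 / 2 * (∑ i, κ x i * κ x i) - fderiv ℝ φ x (κ x)) φ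
      (fun x => 1 / 2 * fderiv ℝ (fderiv ℝ φ) x (κ x) (κ x))
      (fun x => (∑ i, κ x i * u x i) - fderiv ℝ φ x (u x) - fderiv ℝ ψ x (κ x)) ψ
      ((mS2.const_mul _).sub mφκ) hφm (mφκκ.const_mul _) ((mS11.sub mφu).sub mψκ) hψm L
      ?_ ?_ ?_ ?_ ?_
      (fun x y => (1 / 2) * ∑ i, (κ x i * y + u x i * t) ^ 2
          - (φ (x + y • κ x + t • u x) * y + ψ (x + y • κ x + t • u x) * t)) C hC0 ?_ ?_
    · intro x
      have h1 := abs_le.1 (bS2 x)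
      have h2 := abs_le.1 (bφκ x)
      rw [hL, abs_le]
      constructor <;> linarith [h1.1, h1.2, h2.1, h2.2]
    · intro x
      rw [hL]
      linarith [φ0 x]
    · intro x
      have h1 := abs_le.1 (bB x (κ x) (κ x) (κn x) (κn x))
      rw [hL, abs_le]
      constructor <;> linarith [h1.1, h1.2]
    · intro x
      have h1 := abs_le.1 (bS11 x)
      have h2 := abs_le.1 (bφu x)
      have h3 := abs_le.1 (bψκ x)
      rw [hL, abs_le]
      constructor <;> linarith [h1.1, h1.2, h2.1, h2.2, h3.1, h3.2]
    · intro x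
      rw [hL]
      linarith [ψ0 x]
    · have mx : Measurable fun z : (Fin n → ℝ) × ℝ => z.1 + z.2 • κ z.1 + t • u z.1 := by fun_prop
      refine Measurable.sub (Measurable.const_mul (Finset.measurable_sum _ fun i _ => ?_) _)
        (((hφm.comp mx).mul measurable_snd).add ((hψm.comp mx).mul_const t))
      exact ((((κim i).comp measurable_fst).mul measurable_snd).add
        (((uim i).comp measurable_fst).mul_const t)).pow_const 2
    · intro x y
      rw [hC]
      have T1 := φT x (y • κ x + t • u x)
      have T2 := ψT x (y • κ x + t • u x)
      rw [← add_assoc] at T1 T2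
      refine fpf_scalar M K (n * K ^ 2) t y _ (fderiv ℝ ψ x (u x))
        (fderiv ℝ (fderiv ℝ φ) x (κ x) (u x)) (fderiv ℝ (fderiv ℝ φ) x (u x) (κ x))
        (fderiv ℝ (fderiv ℝ φ) x (u x) (u x)) (1 / 2 * ∑ i, u x i * u x i) _ _
        ‖y • κ x + t • u x‖ hM0 hK0 N0 ht ht1 (norm_nonneg _) ?_ (bψu x) ?_
        (bB x _ _ (κn x) (un x)) (bB x _ _ (un x) (κn x)) (bB x _ _ (un x) (un x)) T1 T2 ?_
      · refine (norm_add_le _ _).trans ?_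
        rw [norm_smul, norm_smul, Real.norm_eq_abs, Real.norm_of_nonneg ht.le]
        have h1 := mul_le_mul_of_nonneg_left (κn x) (abs_nonneg y)
        have h2 := mul_le_mul_of_nonneg_left (un x) ht.le
        linarith
      · have h1 := abs_le.1 (bS02 x)
        rw [abs_le]
        constructor <;> linarith [h1.1, h1.2]
      · have hs : ∑ i, (κ x i * y + u x i * t) ^ 2 = (∑ i, κ x i * κ x i) * y ^ 2
            + 2 * (∑ i, κ x i * u x i) * y * t + (∑ i, u x i * u x i) * t ^ 2 := by
          simp only [Finset.mul_sum, Finset.sum_mul]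
          rw [← Finset.sum_add_distrib, ← Finset.sum_add_distrib]
          refine Finset.sum_congr rfl fun i _ => ?_
          ring
        simp only [map_add, map_smul, smul_eq_mul, add_apply,
          smul_apply]
        rw [hs]
        ring
  refine ⟨|L * Mh ^ 2 + L * (Mh ^ 3 + 3 * Mh) + L * Mh
      + C * (8 * (Mh ^ 4 + ∫ x, x ^ 4 ∂(gaussianReal 0 1)) + (Mh ^ 2 + 1) + 1)| + 1,
      by positivity, 1, one_pos, fun t ht ht1 => (key t ht ht1).trans ?_⟩
  refine mul_le_mul_of_nonneg_right ?_ (sq_nonneg t)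
  linarith [le_abs_self (L * Mh ^ 2 + L * (Mh ^ 3 + 3 * Mh) + L * Mh
      + C * (8 * (Mh ^ 4 + ∫ x, x ^ 4 ∂(gaussianReal 0 1)) + (Mh ^ 2 + 1) + 1))]
end
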